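/- In the bounded-degree uniform attachment process with m ≥ 2, fix a cycle length ℓ and a depth k, and let U_0 be the complete max-admissible unicyclic graph of depth k containing an ℓ-cycle (all of whose non-leaf vertices have degree d). Then for every n_0, P( N_{U_0}(n) > n_0 ) → 1 as n → ∞. -/

import Mathlib

open MeasureTheory ProbabilityTheory Filter Topology
open scoped ENNReal

/-- The degree of a vertex in a simple graph on `ℕ` (the number of its neighbours). -/
noncomputable def graphDeg (g : SimpleGraph ℕ) (v : ℕ) : ℕ := (g.neighborSet v).ncard

/-- The complete graph on the vertex set `[m] = {1,…,m}`, viewed as a simple graph on `ℕ`. -/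
def initGraph (m : ℕ) : SimpleGraph ℕ :=
  SimpleGraph.fromRel (fun a b => a ∈ Finset.Icc 1 m ∧ b ∈ Finset.Icc 1 m)

/-- The graph obtained from `g` by joining the (new) vertex `v` to every vertex of `S`. -/
def attachStep (g : SimpleGraph ℕ) (v : ℕ) (S : Finset ℕ) : SimpleGraph ℕ :=
  g ⊔ SimpleGraph.fromRel (fun a b => a = v ∧ b ∈ S)

/-- The set of vertices of `[n] = {1,…,n}` whose degree in `g` is strictly less than `d`. -/
noncomputable def lowDegSet (d : ℕ) (g : SimpleGraph ℕ) (n : ℕ) : Finset ℕ :=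
  (Finset.Icc 1 n).filter (fun v => graphDeg g v < d)

/-- `IsUAProcess m d μ G` says that `(G n)_{n ≥ m}` (as random graphs on `ℕ`, with `G n`
supported on the vertex set `[n] = {1,…,n}`) is the bounded-degree uniform attachment
process: `G m` is the complete graph on `[m]`, and `G (n+1)` is obtained from `G n` by
joining the new vertex `n+1` to a uniformly chosen `m`-element subset of the set of
vertices of `G n` of degree less than `d`, conditionally on `G n` and independently of
the past (note that `G n` determines the whole past of the process). -/
def IsUAProcess (m d : ℕ) {Ω : Type*} [MeasurableSpace Ω] (μ : Measure Ω)
    (G : ℕ → Ω → SimpleGraph ℕ) : Prop :=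
  (∀ n g, MeasurableSet {ω | G n ω = g}) ∧
  (∀ ω, G m ω = initGraph m) ∧
  (∀ n, m ≤ n → ∀ g : SimpleGraph ℕ, ∀ S : Finset ℕ,
    S ⊆ lowDegSet d g n → S.card = m →
    μ ({ω | G (n + 1) ω = attachStep g (n + 1) S} ∩ {ω | G n ω = g})
      = μ {ω | G n ω = g} / (((lowDegSet d g n).card.choose m : ℝ≥0∞)))

/-- The graphs on `ℕ` reachable by the bounded-degree uniform attachment process at time
`n`. -/
inductive UAReachable (m d : ℕ) : ℕ → SimpleGraph ℕ → Prop
  | init : UAReachable m d m (initGraph m)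
  | step {n : ℕ} {g : SimpleGraph ℕ} {S : Finset ℕ} :
      m ≤ n → UAReachable m d n g → S ⊆ lowDegSet d g n → S.card = m →
      UAReachable m d (n + 1) (attachStep g (n + 1) S)

/-- A graph is unicyclic if it is connected and contains exactly one cycle; for a finite
graph this means connected with as many edges as vertices. -/
def IsUnicyclic {t : ℕ} (U : SimpleGraph (Fin t)) : Prop :=
  U.Connected ∧ U.edgeSet.ncard = t

/-- The set of vertices lying on some cycle of `U` (in a unicyclic graph, the vertex set of
its unique cycle). -/
def cycleVerts {V : Type*} (U : SimpleGraph V) : Set V :=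
  {v : V | ∃ c : U.Walk v v, c.IsCycle}

/-- `U` contains a cycle of length `ℓ`. -/
def HasCycleOfLength {V : Type*} (U : SimpleGraph V) (ℓ : ℕ) : Prop :=
  ∃ v : V, ∃ c : U.Walk v v, c.IsCycle ∧ c.length = ℓ

/-- A unicyclic graph has depth `k` if the disjoint trees growing from its cycle all have
depth exactly `k`: every vertex is at distance at most `k` from the cycle, and from each
cycle vertex `v` there is a vertex `w` of the tree growing from `v` (i.e. whose nearest
cycle vertex is `v`) at distance exactly `k` from `v`. -/
def UnicyclicDepth {V : Type*} (U : SimpleGraph V) (k : ℕ) : Prop :=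
  (∀ w : V, ∃ v ∈ cycleVerts U, U.dist v w ≤ k) ∧
  (∀ v ∈ cycleVerts U, ∃ w : V, U.dist v w = k ∧
    ∀ u ∈ cycleVerts U, U.dist v w ≤ U.dist u w)

/-- A unicyclic graph is complete (w.r.t. the degree bound `d`) if all its non-leaf vertices
(vertices of degree at least `2`) have degree `d`. -/
def UnicyclicComplete {V : Type*} (U : SimpleGraph V) (d : ℕ) : Prop :=
  ∀ v : V, 2 ≤ (U.neighborSet v).ncard → (U.neighborSet v).ncard = d

/-- `H` is a maximal unicyclic subgraph of `g`: it is finite, connected and unicyclic, and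
every non-leaf vertex of `H` is adjacent in `g` only to vertices of `H`. -/
def IsMaxUnicyclicSubgraph (g : SimpleGraph ℕ) (H : g.Subgraph) : Prop :=
  H.verts.Finite ∧ H.coe.Connected ∧ H.edgeSet.ncard = H.verts.ncard ∧
  ∀ u ∈ H.verts, 2 ≤ (H.neighborSet u).ncard → ∀ w : ℕ, g.Adj u w → w ∈ H.verts

/-- `N_U(n)`: the number of maximal unicyclic subgraphs of `g` isomorphic to `U`. -/
noncomputable def unicyclicCount (g : SimpleGraph ℕ) {t : ℕ} (U : SimpleGraph (Fin t)) : ℕ :=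
  {H : g.Subgraph | IsMaxUnicyclicSubgraph g H ∧ Nonempty (U ≃g H.coe)}.ncard

/-- A unicyclic graph is max-admissible if it occurs as a maximal unicyclic subgraph of a
possible value of `G_n` for all sufficiently large `n`. -/
def MaxAdmissibleUnicyclic (m d : ℕ) {t : ℕ} (U : SimpleGraph (Fin t)) : Prop :=
  ∃ N : ℕ, ∀ n : ℕ, N ≤ n → ∃ g : SimpleGraph ℕ, UAReachable m d n g ∧
    1 ≤ unicyclicCount g U

/-!
Suppose a graph has linearly many disjoint trees with roots of low degree. A new vertex is joined
to `m` of the roots with probability bounded away from `0`, which makes a deeper tree out of `m`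
shallow ones; balancing the trees gained against those lost, the number of deep trees has a positive
drift. A new vertex is joined to one given low-degree vertex and `m - 1` roots with probability at
least `p / n`, and a given finite part of the graph is disturbed with probability at most `b / n`,
so within a time window proportional to `n` the former happens first with probability bounded away
from `0`.

With linearly many deep trees available, a new vertex joined to both ends of a path inside one of
them closes an `ℓ`-cycle; the rest of the copy of `U₀` is then added one vertex at a time. Hence
from every late reachable graph with `j` copies the process reaches `j + 1` copies with probability
at least some `ε > 0`. Complete copies cannot be destroyed, because their non-leaf vertices are
saturated, and a persistent event that is hit with probability at least `ε` from every state occurs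
with probability tending to `1`. Induction on `j` finishes the proof.
-/

/-! ### Attachment steps -/

theorem attachStep_adj (g : SimpleGraph ℕ) (x : ℕ) (S : Finset ℕ) (a b : ℕ) :
    (attachStep g x S).Adj a b ↔
      g.Adj a b ∨ (a ≠ b ∧ ((a = x ∧ b ∈ S) ∨ (b = x ∧ a ∈ S))) := by
  simp [attachStep]

theorem le_attachStep (g : SimpleGraph ℕ) (x : ℕ) (S : Finset ℕ) : g ≤ attachStep g x S :=
  le_sup_left

/-- All edges of `g` join vertices of `[n] = {1,…,n}`. -/
def SupportedOn (n : ℕ) (g : SimpleGraph ℕ) : Prop := ∀ a b, g.Adj a b → a ∈ Finset.Icc 1 n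

section Supported

variable {n : ℕ} {g : SimpleGraph ℕ} {S : Finset ℕ} {v : ℕ}

theorem SupportedOn.neighborSet_subset (h : SupportedOn n g) (v : ℕ) :
    g.neighborSet v ⊆ (Finset.Icc 1 n : Finset ℕ) := fun w hw => h w v hw.symm

theorem SupportedOn.finite_neighborSet (h : SupportedOn n g) (v : ℕ) :
    (g.neighborSet v).Finite := (Finset.finite_toSet _).subset (h.neighborSet_subset v)

theorem SupportedOn.succ_notMem_neighborSet (h : SupportedOn n g) (v : ℕ) :
    n + 1 ∉ g.neighborSet v := fun hw => by
  simpa using h.neighborSet_subset v hw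

theorem neighborSet_attachStep_new (h : SupportedOn n g) (hS : S ⊆ Finset.Icc 1 n) :
    (attachStep g (n + 1) S).neighborSet (n + 1) = S := by
  ext w
  simp only [SimpleGraph.mem_neighborSet, attachStep_adj, Finset.mem_coe]
  constructor
  · rintro (hw | ⟨hne, ⟨-, hw⟩ | ⟨rfl, hw⟩⟩)
    · simpa using h _ _ hw
    · exact hw
    · exact hw
  · intro hw
    have := Finset.mem_Icc.1 (hS hw)
    exact Or.inr ⟨by omega, Or.inl ⟨trivial, hw⟩⟩

theorem neighborSet_attachStep_of_mem (hS : S ⊆ Finset.Icc 1 n) (hv : v ∈ S) :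
    (attachStep g (n + 1) S).neighborSet v = insert (n + 1) (g.neighborSet v) := by
  have hvn := Finset.mem_Icc.1 (hS hv)
  ext w
  simp only [SimpleGraph.mem_neighborSet, attachStep_adj, Set.mem_insert_iff]
  constructor
  · rintro (hw | ⟨-, ⟨rfl, -⟩ | ⟨rfl, -⟩⟩)
    · exact Or.inr hw
    · omega
    · exact Or.inl rfl
  · rintro (rfl | hw)
    · exact Or.inr ⟨by omega, Or.inr ⟨rfl, hv⟩⟩
    · exact Or.inl hw

theorem neighborSet_attachStep_of_notMem (hv : v ∉ S) (hvn : v ≠ n + 1) :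
    (attachStep g (n + 1) S).neighborSet v = g.neighborSet v := by
  ext w
  simp only [SimpleGraph.mem_neighborSet, attachStep_adj]
  tauto

theorem SupportedOn.attach (h : SupportedOn n g) (hS : S ⊆ Finset.Icc 1 n) :
    SupportedOn (n + 1) (attachStep g (n + 1) S) := by
  intro a b hab
  rw [attachStep_adj] at hab
  rcases hab with hab | ⟨-, ⟨rfl, -⟩ | ⟨-, ha⟩⟩
  · have := Finset.mem_Icc.1 (h a b hab)
    exact Finset.mem_Icc.2 ⟨this.1, by omega⟩
  · simp
  · have := Finset.mem_Icc.1 (hS ha)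
    exact Finset.mem_Icc.2 ⟨this.1, by omega⟩

theorem graphDeg_attachStep_new (h : SupportedOn n g) (hS : S ⊆ Finset.Icc 1 n) :
    graphDeg (attachStep g (n + 1) S) (n + 1) = S.card := by
  rw [graphDeg, neighborSet_attachStep_new h hS, Set.ncard_coe_finset]

theorem graphDeg_attachStep_of_ne (h : SupportedOn n g) (hS : S ⊆ Finset.Icc 1 n)
    (hvn : v ≠ n + 1) :
    graphDeg (attachStep g (n + 1) S) v = graphDeg g v + if v ∈ S then 1 else 0 := by
  split_ifs with hv
  · rw [graphDeg, neighborSet_attachStep_of_mem hS hv,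
      Set.ncard_insert_of_notMem (h.succ_notMem_neighborSet v) (h.finite_neighborSet v), graphDeg]
  · rw [graphDeg, neighborSet_attachStep_of_notMem hv hvn, graphDeg, add_zero]

theorem SupportedOn.injOn_attachStep (h : SupportedOn n g) :
    Set.InjOn (attachStep g (n + 1)) {S | S ⊆ Finset.Icc 1 n} := by
  intro S hS S' hS' heq
  have hnew := neighborSet_attachStep_new h hS
  rw [heq, neighborSet_attachStep_new h hS'] at hnew
  exact_mod_cast hnew.symm

end Supported

theorem lowDegSet_subset (d : ℕ) (g : SimpleGraph ℕ) (n : ℕ) :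
    lowDegSet d g n ⊆ Finset.Icc 1 n := Finset.filter_subset _ _

theorem mem_lowDegSet {d : ℕ} {g : SimpleGraph ℕ} {n v : ℕ} :
    v ∈ lowDegSet d g n ↔ v ∈ Finset.Icc 1 n ∧ graphDeg g v < d := Finset.mem_filter

theorem card_lowDegSet_le (d : ℕ) (g : SimpleGraph ℕ) (n : ℕ) : (lowDegSet d g n).card ≤ n := by
  simpa using Finset.card_le_card (lowDegSet_subset d g n)

/-- The possible neighbourhoods of the vertex `n + 1` when it is added to the graph `g` at
time `n`. -/
noncomputable def attachSets (m d n : ℕ) (g : SimpleGraph ℕ) : Finset (Finset ℕ) :=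
  (lowDegSet d g n).powersetCard m

section AttachSets

variable {m d n : ℕ} {g : SimpleGraph ℕ} {S : Finset ℕ}

theorem mem_attachSets : S ∈ attachSets m d n g ↔ S ⊆ lowDegSet d g n ∧ S.card = m :=
  Finset.mem_powersetCard

theorem subset_lowDegSet_of_mem_attachSets (hS : S ∈ attachSets m d n g) : S ⊆ lowDegSet d g n :=
  (mem_attachSets.1 hS).1

theorem subset_Icc_of_mem_attachSets (hS : S ∈ attachSets m d n g) : S ⊆ Finset.Icc 1 n :=
  (subset_lowDegSet_of_mem_attachSets hS).trans (lowDegSet_subset d g n)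

theorem card_of_mem_attachSets (hS : S ∈ attachSets m d n g) : S.card = m :=
  (mem_attachSets.1 hS).2

theorem card_attachSets (m d n : ℕ) (g : SimpleGraph ℕ) :
    (attachSets m d n g).card = (lowDegSet d g n).card.choose m := Finset.card_powersetCard _ _

end AttachSets

/-! ### Reachable graphs -/

/-- Deterministic bounds shared by all graphs reachable at time `n`. The vertex `v` is born with
degree `m` and gains at most one edge per later step, which gives `graphDeg_add_le`. -/
structure UAInvariant (m d n : ℕ) (g : SimpleGraph ℕ) : Prop where
  supportedOn : SupportedOn n g
  graphDeg_le : ∀ v, graphDeg g v ≤ d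
  graphDeg_add_le : ∀ v ∈ Finset.Icc 1 n, graphDeg g v + v ≤ m + n
  sum_graphDeg_le : ∑ v ∈ Finset.Icc 1 n, graphDeg g v ≤ 2 * m * n

section Reachable

variable {m d n : ℕ} {g : SimpleGraph ℕ} {S : Finset ℕ}

theorem uaInvariant_init (hd : m ≤ d) : UAInvariant m d m (initGraph m) := by
  have hsupp : SupportedOn m (initGraph m) := by
    intro a b hab
    simp only [initGraph, SimpleGraph.fromRel_adj] at hab
    tauto
  have hdeg : ∀ v, graphDeg (initGraph m) v ≤ m := fun v => by
    simpa [graphDeg] using Set.ncard_le_ncard (hsupp.neighborSet_subset v) (Finset.finite_toSet _)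
  refine ⟨hsupp, fun v => (hdeg v).trans hd, fun v hv => ?_, ?_⟩
  · exact Nat.add_le_add (hdeg v) (Finset.mem_Icc.1 hv).2
  · calc ∑ v ∈ Finset.Icc 1 m, graphDeg (initGraph m) v
        ≤ ∑ _v ∈ Finset.Icc 1 m, m := Finset.sum_le_sum fun v _ => hdeg v
      _ = m * m := by simp
      _ ≤ 2 * m * m := Nat.mul_le_mul_right m (by omega)

theorem UAInvariant.attach (hd : m ≤ d) (h : UAInvariant m d n g) (hS : S ∈ attachSets m d n g) :
    UAInvariant m d (n + 1) (attachStep g (n + 1) S) := by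
  have hSn := subset_Icc_of_mem_attachSets hS
  have hdeg := fun v => graphDeg_attachStep_of_ne (v := v) h.supportedOn hSn
  have hnew := graphDeg_attachStep_new h.supportedOn hSn
  rw [card_of_mem_attachSets hS] at hnew
  refine ⟨h.supportedOn.attach hSn, fun v => ?_, fun v hv => ?_, ?_⟩
  · obtain rfl | hvn := eq_or_ne v (n + 1)
    · exact hnew.trans_le hd
    · rw [hdeg v hvn]
      split_ifs with hvS
      · exact (mem_lowDegSet.1 (subset_lowDegSet_of_mem_attachSets hS hvS)).2
      · exact h.graphDeg_le v
  · obtain rfl | hvn := eq_or_ne v (n + 1)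
    · rw [hnew]
    · have hv' := Finset.mem_Icc.1 hv
      have := h.graphDeg_add_le v (Finset.mem_Icc.2 ⟨hv'.1, by omega⟩)
      rw [hdeg v hvn]
      split_ifs <;> omega
  · have hold : ∑ v ∈ Finset.Icc 1 n, graphDeg (attachStep g (n + 1) S) v =
        ∑ v ∈ Finset.Icc 1 n, graphDeg g v + m := by
      rw [Finset.sum_congr rfl fun v hv => hdeg v (by have := (Finset.mem_Icc.1 hv).2; omega),
        Finset.sum_add_distrib, Finset.sum_ite_mem, Finset.inter_eq_right.2 hSn,
        Finset.sum_const, smul_eq_mul, mul_one, card_of_mem_attachSets hS]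
    rw [Finset.sum_Icc_succ_top (by omega), hnew, hold]
    linarith [h.sum_graphDeg_le]

namespace UAReachable

theorem invariant (hd : m ≤ d) (h : UAReachable m d n g) : UAInvariant m d n g := by
  induction h with
  | init => exact uaInvariant_init hd
  | step _ _ hS hc ih => exact ih.attach hd (mem_attachSets.2 ⟨hS, hc⟩)

theorem le (h : UAReachable m d n g) : m ≤ n := by
  cases h with
  | init => exact le_rfl
  | step hn => exact Nat.le_succ_of_le hn

theorem attach (h : UAReachable m d n g) (hS : S ∈ attachSets m d n g) :
    UAReachable m d (n + 1) (attachStep g (n + 1) S) :=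
  step h.le h (subset_lowDegSet_of_mem_attachSets hS) (card_of_mem_attachSets hS)

theorem le_card_lowDegSet (hd : 2 * m < d) (h : UAReachable m d n g) :
    m ≤ (lowDegSet d g n).card := by
  have hle := h.le
  have hlate : Finset.Icc (n + 1 - m) n ⊆ lowDegSet d g n := by
    intro v hv
    have hv' := Finset.mem_Icc.1 hv
    have hvn : v ∈ Finset.Icc 1 n := Finset.mem_Icc.2 ⟨by omega, by omega⟩
    have := (h.invariant (by omega)).graphDeg_add_le v hvn
    exact mem_lowDegSet.2 ⟨hvn, by omega⟩
  calc m = (Finset.Icc (n + 1 - m) n).card := by rw [Nat.card_Icc]; omega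
    _ ≤ _ := Finset.card_le_card hlate

theorem attachSets_nonempty (hd : 2 * m < d) (h : UAReachable m d n g) :
    (attachSets m d n g).Nonempty :=
  Finset.powersetCard_nonempty.2 (h.le_card_lowDegSet hd)

-- The degree sum is at most `2mn` and `2m < d`, so a positive proportion of the vertices must
-- have degree less than `d`.
theorem le_mul_card_lowDegSet (hd : 2 * m < d) (h : UAReachable m d n g) :
    n ≤ d * (lowDegSet d g n).card := by
  set full := (Finset.Icc 1 n).filter (fun v => ¬ graphDeg g v < d) with hfull
  have hsplit : (lowDegSet d g n).card + full.card = n := by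
    simpa [lowDegSet, hfull] using
      Finset.card_filter_add_card_filter_not (s := Finset.Icc 1 n) (fun v => graphDeg g v < d)
  have hle : full.card * d ≤ 2 * m * n :=
    calc full.card * d = ∑ _v ∈ full, d := by simp
      _ ≤ ∑ v ∈ full, graphDeg g v :=
          Finset.sum_le_sum fun v hv => not_lt.1 (Finset.mem_filter.1 hv).2
      _ ≤ ∑ v ∈ Finset.Icc 1 n, graphDeg g v :=
          Finset.sum_le_sum_of_subset (Finset.filter_subset _ _)
      _ ≤ 2 * m * n := (h.invariant (by omega)).sum_graphDeg_le
  nlinarith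

end UAReachable

theorem uaReachable_succ_iff :
    UAReachable m d (n + 1) g ↔ (n + 1 = m ∧ g = initGraph m) ∨
      ∃ g', UAReachable m d n g' ∧ ∃ S ∈ attachSets m d n g', attachStep g' (n + 1) S = g := by
  constructor
  · generalize hk : n + 1 = k
    intro h
    cases h with
    | init => exact Or.inl ⟨rfl, rfl⟩
    | step hn hg hS hc =>
      obtain rfl := Nat.succ.inj hk
      exact Or.inr ⟨_, hg, _, mem_attachSets.2 ⟨hS, hc⟩, rfl⟩
  · rintro (⟨rfl, rfl⟩ | ⟨g', hg', S, hS, rfl⟩)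
    · exact UAReachable.init
    · exact hg'.attach hS

theorem finite_uaReachable (m d n : ℕ) : {g | UAReachable m d n g}.Finite := by
  induction n with
  | zero =>
    refine (Set.finite_singleton (initGraph m)).subset ?_
    generalize hk : 0 = k
    rintro g (- | ⟨hn⟩)
    · rfl
    · omega
  | succ n ih =>
    have hsteps : (⋃ g ∈ {g | UAReachable m d n g},
        attachStep g (n + 1) '' (attachSets m d n g : Set (Finset ℕ))).Finite :=
      ih.biUnion fun g _ => (Finset.finite_toSet _).image _
    refine (hsteps.union (Set.finite_singleton (initGraph m))).subset fun g hg => ?_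
    obtain ⟨-, rfl⟩ | ⟨g', hg', hS⟩ := uaReachable_succ_iff.1 hg
    · exact Or.inr rfl
    · exact Or.inl (Set.mem_biUnion hg' hS)

/-- The finite set of graphs reachable by the process at time `n`. -/
noncomputable def reachableGraphs (m d n : ℕ) : Finset (SimpleGraph ℕ) :=
  (finite_uaReachable m d n).toFinset

theorem mem_reachableGraphs : g ∈ reachableGraphs m d n ↔ UAReachable m d n g :=
  Set.Finite.mem_toFinset _

end Reachable

/-! ### One step of the process -/

open scoped BigOperators

open Classical in
/-- The probability that the random neighbourhood of the vertex `n + 1`, added to the graph `g`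
at time `n`, satisfies `p`. -/
noncomputable def stepProb (m d n : ℕ) (g : SimpleGraph ℕ) (p : Finset ℕ → Prop) : ℝ :=
  𝔼 S ∈ attachSets m d n g, if p S then 1 else 0

section OneStep

variable {m d n : ℕ} {g : SimpleGraph ℕ}

theorem stepProb_eq_card_div (m d n : ℕ) (g : SimpleGraph ℕ) (p : Finset ℕ → Prop)
    [DecidablePred p] :
    stepProb m d n g p = ((attachSets m d n g).filter p).card / (attachSets m d n g).card := by
  simp only [stepProb, Finset.expect_eq_sum_div_card, Finset.card_filter, Nat.cast_sum,
    Nat.cast_ite, Nat.cast_one, Nat.cast_zero]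
  congr!

theorem card_mul_card_filter_mem_powersetCard {α : Type*} [DecidableEq α] {s : Finset α} {v : α}
    (hv : v ∈ s) {m : ℕ} (hm : 1 ≤ m) :
    s.card * ((s.powersetCard m).filter (fun S => v ∈ S)).card = s.card.choose m * m := by
  have hcard : ((s.powersetCard m).filter (fun S => v ∈ S)).card = (s.card - 1).choose (m - 1) := by
    simpa using Finset.card_filter_powersetCard_subset {v} s m (by simpa) (by simpa)
  have hs : s.card - 1 + 1 = s.card := Nat.sub_add_cancel (Finset.card_pos.2 ⟨v, hv⟩)
  have hpascal := Nat.add_one_mul_choose_eq (s.card - 1) (m - 1)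
  rwa [hs, Nat.sub_add_cancel hm, ← hcard] at hpascal

theorem UAReachable.stepProb_mem_le (hm : 1 ≤ m) (hd : 2 * m < d) (h : UAReachable m d n g)
    (v : ℕ) : stepProb m d n g (fun S => v ∈ S) ≤ m * d / n := by
  have hpos := Finset.card_pos.2 (h.attachSets_nonempty hd)
  have hlow := h.le_mul_card_lowDegSet hd
  have hn : 0 < n := hm.trans h.le
  rw [stepProb_eq_card_div, div_le_div_iff₀ (by exact_mod_cast hpos) (by exact_mod_cast hn)]
  norm_cast
  by_cases hv : v ∈ lowDegSet d g n
  · have hcount := card_mul_card_filter_mem_powersetCard hv hm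
    calc ((attachSets m d n g).filter (fun S => v ∈ S)).card * n
        ≤ ((attachSets m d n g).filter (fun S => v ∈ S)).card *
            (d * (lowDegSet d g n).card) := Nat.mul_le_mul_left _ hlow
      _ = d * ((lowDegSet d g n).card *
            ((attachSets m d n g).filter (fun S => v ∈ S)).card) := by ring
      _ = d * ((attachSets m d n g).card * m) := by
          rw [attachSets, hcount, Finset.card_powersetCard]
      _ = m * d * (attachSets m d n g).card := by ring
  · have hempty : (attachSets m d n g).filter (fun S => v ∈ S) = ∅ :=
      Finset.filter_eq_empty_iff.2 fun S hS hvS =>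
        hv (subset_lowDegSet_of_mem_attachSets hS hvS)
    simp [hempty]

theorem exists_mul_pow_le_choose {c : ℝ} (hc : 0 < c) (i : ℕ) :
    ∃ a : ℝ, 0 < a ∧ ∃ N : ℕ, ∀ n : ℕ, N ≤ n → ∀ r : ℕ, c * n ≤ r →
      a * (n : ℝ) ^ i ≤ r.choose i := by
  obtain ⟨N, hN⟩ := exists_nat_gt (2 * i / c)
  refine ⟨(c / 2) ^ i / i.factorial, by positivity, N, fun n hn r hr => ?_⟩
  have hn' : (N : ℝ) ≤ n := by exact_mod_cast hn
  have hi : 2 * (i : ℝ) ≤ c * n := by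
    rw [div_lt_iff₀ hc] at hN
    nlinarith
  have hir : i ≤ r := by
    have : (0 : ℝ) ≤ i := i.cast_nonneg
    exact_mod_cast (show (i : ℝ) ≤ r by linarith)
  have hbase : c / 2 * n ≤ ((r + 1 - i : ℕ) : ℝ) := by
    push_cast [Nat.cast_sub (Nat.le_succ_of_le hir)]
    linarith
  calc (c / 2) ^ i / i.factorial * (n : ℝ) ^ i
      = (c / 2 * n) ^ i / i.factorial := by rw [mul_pow]; ring
    _ ≤ ((r + 1 - i : ℕ) : ℝ) ^ i / i.factorial := by gcongr
    _ ≤ r.choose i := Nat.pow_le_choose (α := ℝ) i r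

theorem UAReachable.div_pow_le_stepProb (hd : 2 * m < d) (h : UAReachable m d n g) (hn : 0 < n)
    {p : Finset ℕ → Prop} {T : Finset (Finset ℕ)} (hT : ∀ S ∈ T, S ∈ attachSets m d n g ∧ p S)
    {i : ℕ} (him : i ≤ m) {a : ℝ} (ha : 0 ≤ a) (hcard : a * (n : ℝ) ^ i ≤ T.card) :
    a / (n : ℝ) ^ (m - i) ≤ stepProb m d n g p := by
  classical
  have hpos := Finset.card_pos.2 (h.attachSets_nonempty hd)
  have hall : ((attachSets m d n g).card : ℝ) ≤ (n : ℝ) ^ m := by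
    rw [card_attachSets]
    exact_mod_cast (Nat.choose_le_pow _ _).trans (Nat.pow_le_pow_left (card_lowDegSet_le d g n) m)
  have hsub : (T.card : ℝ) ≤ ((attachSets m d n g).filter p).card := by
    exact_mod_cast Finset.card_le_card fun S hS => Finset.mem_filter.2 (hT S hS)
  rw [stepProb_eq_card_div, div_le_div_iff₀ (by positivity) (by exact_mod_cast hpos)]
  calc a * ((attachSets m d n g).card : ℝ) ≤ a * (n : ℝ) ^ m := by gcongr
    _ = a * (n : ℝ) ^ i * (n : ℝ) ^ (m - i) := by
        rw [mul_assoc, ← pow_add, Nat.add_sub_cancel' him]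
    _ ≤ ((attachSets m d n g).filter p).card * (n : ℝ) ^ (m - i) := by
        gcongr
        exact hcard.trans hsub

end OneStep

/-! ### The law of the process -/

/-- The expectation of `f (G n)`, written as a sum over the finitely many reachable graphs. -/
noncomputable def lawMean (m d : ℕ) {Ω : Type*} [MeasurableSpace Ω] (μ : Measure Ω)
    (G : ℕ → Ω → SimpleGraph ℕ) (n : ℕ) (f : SimpleGraph ℕ → ℝ) : ℝ :=
  ∑ g ∈ reachableGraphs m d n, μ.real {ω | G n ω = g} * f g

section Law

variable {m d n : ℕ} {Ω : Type*} [MeasurableSpace Ω] {μ : Measure Ω} {G : ℕ → Ω → SimpleGraph ℕ}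

theorem lawMean_mono {f f' : SimpleGraph ℕ → ℝ} (h : ∀ g, UAReachable m d n g → f g ≤ f' g) :
    lawMean m d μ G n f ≤ lawMean m d μ G n f' :=
  Finset.sum_le_sum fun g hg =>
    mul_le_mul_of_nonneg_left (h g (mem_reachableGraphs.1 hg)) measureReal_nonneg

theorem lawMean_add_mul (a b : ℝ) (f f' : SimpleGraph ℕ → ℝ) :
    lawMean m d μ G n (fun g => a * f g + b * f' g) =
      a * lawMean m d μ G n f + b * lawMean m d μ G n f' := by
  simp only [lawMean, Finset.mul_sum, ← Finset.sum_add_distrib]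
  exact Finset.sum_congr rfl fun g _ => by ring

theorem IsUAProcess.measureReal_transition (hG : IsUAProcess m d μ G) (hn : m ≤ n)
    {g : SimpleGraph ℕ} {S : Finset ℕ} (hS : S ∈ attachSets m d n g) :
    μ.real ({ω | G (n + 1) ω = attachStep g (n + 1) S} ∩ {ω | G n ω = g}) =
      μ.real {ω | G n ω = g} / (attachSets m d n g).card := by
  have hreal := congrArg ENNReal.toReal (hG.2.2 n hn g S
    (subset_lowDegSet_of_mem_attachSets hS) (card_of_mem_attachSets hS))
  rwa [ENNReal.toReal_div, ENNReal.toReal_natCast, ← card_attachSets m d n g] at hreal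

variable [IsProbabilityMeasure μ]

-- Distinct one-step histories `(g, S)` of the same graph `g'` have distinct first components,
-- because `S` can be read off from `g'`.
theorem IsUAProcess.sum_measureReal_transition_le (hd : m ≤ d) (hG : IsUAProcess m d μ G)
    {g' : SimpleGraph ℕ} {I : Finset (Σ _ : SimpleGraph ℕ, Finset ℕ)}
    (hI : ∀ q ∈ I, UAReachable m d n q.1 ∧ q.2 ∈ attachSets m d n q.1 ∧
      attachStep q.1 (n + 1) q.2 = g') :
    ∑ q ∈ I, μ.real ({ω | G (n + 1) ω = attachStep q.1 (n + 1) q.2} ∩ {ω | G n ω = q.1}) ≤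
      μ.real {ω | G (n + 1) ω = g'} := by
  rw [← measureReal_biUnion_finset]
  · refine measureReal_mono (Set.iUnion₂_subset fun q hq ω hω => ?_)
    rw [← (hI q hq).2.2]
    exact hω.1
  · rintro ⟨g₁, S₁⟩ hq ⟨g₂, S₂⟩ hq' hne
    refine Set.disjoint_left.2 fun ω hω hω' => hne ?_
    obtain rfl : g₁ = g₂ := hω.2.symm.trans hω'.2
    obtain ⟨hg, hS₁, h₁⟩ := hI _ hq
    obtain ⟨-, hS₂, h₂⟩ := hI _ hq'
    obtain rfl : S₁ = S₂ := (hg.invariant hd).supportedOn.injOn_attachStep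
      (subset_Icc_of_mem_attachSets hS₁) (subset_Icc_of_mem_attachSets hS₂) (h₁.trans h₂.symm)
    rfl
  · exact fun q _ => (hG.1 _ _).inter (hG.1 _ _)

theorem IsUAProcess.lawMean_expect_le (hd : m ≤ d) (hG : IsUAProcess m d μ G) (hn : m ≤ n)
    {f : SimpleGraph ℕ → ℝ} (hf : ∀ g, UAReachable m d (n + 1) g → 0 ≤ f g) :
    lawMean m d μ G n (fun g => 𝔼 S ∈ attachSets m d n g, f (attachStep g (n + 1) S)) ≤
      lawMean m d μ G (n + 1) f := by
  classical
  set E : (Σ _ : SimpleGraph ℕ, Finset ℕ) → Set Ω := fun q =>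
    {ω | G (n + 1) ω = attachStep q.1 (n + 1) q.2} ∩ {ω | G n ω = q.1} with hE
  set I := (reachableGraphs m d n).sigma (attachSets m d n) with hI
  have hmem : ∀ q ∈ I, UAReachable m d n q.1 ∧ q.2 ∈ attachSets m d n q.1 := fun q hq =>
    ⟨mem_reachableGraphs.1 (Finset.mem_sigma.1 hq).1, (Finset.mem_sigma.1 hq).2⟩
  have hmaps : ∀ q ∈ I, attachStep q.1 (n + 1) q.2 ∈ reachableGraphs m d (n + 1) := fun q hq =>
    mem_reachableGraphs.2 ((hmem q hq).1.attach (hmem q hq).2)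
  calc lawMean m d μ G n (fun g => 𝔼 S ∈ attachSets m d n g, f (attachStep g (n + 1) S))
      = ∑ q ∈ I, μ.real (E q) * f (attachStep q.1 (n + 1) q.2) := by
        rw [hI, Finset.sum_sigma, lawMean]
        refine Finset.sum_congr rfl fun g _ => ?_
        rw [Finset.expect_eq_sum_div_card, mul_div_assoc', Finset.mul_sum, Finset.sum_div]
        refine Finset.sum_congr rfl fun S hS => ?_
        rw [hE, hG.measureReal_transition hn hS]
        ring
    _ = ∑ g' ∈ reachableGraphs m d (n + 1),
          ∑ q ∈ I with attachStep q.1 (n + 1) q.2 = g', μ.real (E q) * f g' := by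
        rw [← Finset.sum_fiberwise_of_maps_to hmaps]
        refine Finset.sum_congr rfl fun g' _ => Finset.sum_congr rfl fun q hq => ?_
        rw [(Finset.mem_filter.1 hq).2]
    _ ≤ lawMean m d μ G (n + 1) f := by
        refine Finset.sum_le_sum fun g' hg' => ?_
        rw [← Finset.sum_mul]
        refine mul_le_mul_of_nonneg_right (hG.sum_measureReal_transition_le hd fun q hq => ?_)
          (hf g' (mem_reachableGraphs.1 hg'))
        have hq' := Finset.mem_filter.1 hq
        exact ⟨(hmem q hq'.1).1, (hmem q hq'.1).2, hq'.2⟩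

theorem IsUAProcess.lawMean_indicator_le (hG : IsUAProcess m d μ G) (Z : Set (SimpleGraph ℕ)) :
    ENNReal.ofReal (lawMean m d μ G n (Z.indicator 1)) ≤ μ {ω | G n ω ∈ Z} := by
  classical
  have hunion : lawMean m d μ G n (Z.indicator 1) =
      μ.real (⋃ g ∈ (reachableGraphs m d n).filter (· ∈ Z), {ω | G n ω = g}) := by
    rw [measureReal_biUnion_finset]
    · simp [lawMean, Finset.sum_filter, Set.indicator_apply]
    · intro g _ g' _ hne
      exact Set.disjoint_left.2 fun ω hω hω' => hne (hω.symm.trans hω')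
    · exact fun g _ => hG.1 _ _
  rw [hunion, ofReal_measureReal (measure_ne_top μ _)]
  refine measure_mono (Set.iUnion₂_subset fun g hg ω hω => ?_)
  rw [Set.mem_ofPred_eq] at hω ⊢
  exact hω ▸ (Finset.mem_filter.1 hg).2

theorem IsUAProcess.lawMean_indicator_le_one (hG : IsUAProcess m d μ G)
    (Z : Set (SimpleGraph ℕ)) : lawMean m d μ G n (Z.indicator 1) ≤ 1 :=
  ENNReal.ofReal_le_one.1 ((hG.lawMean_indicator_le Z).trans prob_le_one)

theorem IsUAProcess.lawMean_one (hd : 2 * m < d) (hG : IsUAProcess m d μ G) (hn : m ≤ n) :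
    lawMean m d μ G n 1 = 1 := by
  refine le_antisymm ?_ ?_
  · simpa using hG.lawMean_indicator_le_one Set.univ
  · induction n, hn using Nat.le_induction with
    | base =>
      calc (1 : ℝ) = μ.real {ω | G m ω = initGraph m} * 1 := by simp [hG.2.1]
        _ ≤ lawMean m d μ G m 1 :=
          Finset.single_le_sum (f := fun g => μ.real {ω | G m ω = g} * 1)
            (fun g _ => by positivity) (mem_reachableGraphs.2 UAReachable.init)
    | succ n hn ih =>
      calc (1 : ℝ) ≤ lawMean m d μ G n 1 := ih
        _ ≤ lawMean m d μ G n (fun g => 𝔼 _S ∈ attachSets m d n g, (1 : ℝ)) :=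
          lawMean_mono fun g hg => (Finset.expect_const (hg.attachSets_nonempty hd) _).ge
        _ ≤ lawMean m d μ G (n + 1) 1 :=
          hG.lawMean_expect_le (by omega) hn (f := 1) fun _ _ => zero_le_one

end Law

/-! ### Hitting probabilities -/

/-- The probability that the process started from the graph `g` at time `n` is in `Z` after `k`
further steps. -/
noncomputable def probAfter (m d : ℕ) (Z : Set (SimpleGraph ℕ)) : ℕ → ℕ → SimpleGraph ℕ → ℝ
  | 0, _, g => Z.indicator 1 g
  | k + 1, n, g => 𝔼 S ∈ attachSets m d n g, probAfter m d Z k (n + 1) (attachStep g (n + 1) S)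

/-- The probability that the process started from the graph `g` at time `n` ever enters `Z`. The
supremum is this probability only when `Z` is `Persistent`. -/
noncomputable def hitProb (m d : ℕ) (Z : Set (SimpleGraph ℕ)) (n : ℕ) (g : SimpleGraph ℕ) : ℝ :=
  ⨆ k, probAfter m d Z k n g

/-- The process cannot leave `Z`. -/
def Persistent (m d : ℕ) (Z : Set (SimpleGraph ℕ)) : Prop :=
  ∀ n g, UAReachable m d n g → g ∈ Z → ∀ S ∈ attachSets m d n g, attachStep g (n + 1) S ∈ Z

section Hitting

variable {m d n : ℕ} {g : SimpleGraph ℕ} {Z : Set (SimpleGraph ℕ)}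

theorem UAReachable.probAfter_mem_Icc (hd : 2 * m < d) (h : UAReachable m d n g) (k : ℕ) :
    probAfter m d Z k n g ∈ Set.Icc (0 : ℝ) 1 := by
  induction k generalizing n g with
  | zero => by_cases hg : g ∈ Z <;> simp [probAfter, hg]
  | succ k ih =>
    have hne := h.attachSets_nonempty hd
    exact ⟨Finset.le_expect hne fun S hS => (ih (h.attach hS)).1,
      Finset.expect_le hne fun S hS => (ih (h.attach hS)).2⟩

theorem Persistent.probAfter_eq_one (hd : 2 * m < d) (hZ : Persistent m d Z)
    (h : UAReachable m d n g) (hg : g ∈ Z) (k : ℕ) : probAfter m d Z k n g = 1 := by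
  induction k generalizing n g with
  | zero => simp [probAfter, hg]
  | succ k ih =>
    rw [probAfter, Finset.expect_congr rfl fun S hS => ih (h.attach hS) (hZ n g h hg S hS),
      Finset.expect_const (h.attachSets_nonempty hd)]

theorem Persistent.probAfter_le_succ (hd : 2 * m < d) (hZ : Persistent m d Z)
    (h : UAReachable m d n g) (k : ℕ) : probAfter m d Z k n g ≤ probAfter m d Z (k + 1) n g := by
  induction k generalizing n g with
  | zero =>
    by_cases hg : g ∈ Z
    · rw [hZ.probAfter_eq_one hd h hg, hZ.probAfter_eq_one hd h hg]
    · simpa [probAfter, hg] using (h.probAfter_mem_Icc (Z := Z) hd 1).1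
  | succ k ih => exact Finset.expect_le_expect fun S hS => ih (h.attach hS)

theorem Persistent.tendsto_probAfter (hd : 2 * m < d) (hZ : Persistent m d Z)
    (h : UAReachable m d n g) :
    Tendsto (fun k => probAfter m d Z k n g) atTop (𝓝 (hitProb m d Z n g)) :=
  tendsto_atTop_ciSup (monotone_nat_of_le_succ (hZ.probAfter_le_succ hd h))
    ⟨1, by rintro _ ⟨k, rfl⟩; exact (h.probAfter_mem_Icc hd k).2⟩

theorem Persistent.hitProb_nonneg (hd : 2 * m < d) (hZ : Persistent m d Z)
    (h : UAReachable m d n g) : 0 ≤ hitProb m d Z n g :=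
  ge_of_tendsto' (hZ.tendsto_probAfter hd h) fun k => (h.probAfter_mem_Icc hd k).1

theorem Persistent.hitProb_of_mem (hd : 2 * m < d) (hZ : Persistent m d Z)
    (h : UAReachable m d n g) (hg : g ∈ Z) : hitProb m d Z n g = 1 := by
  simp [hitProb, hZ.probAfter_eq_one hd h hg]

theorem Persistent.hitProb_eq_expect (hd : 2 * m < d) (hZ : Persistent m d Z)
    (h : UAReachable m d n g) :
    hitProb m d Z n g =
      𝔼 S ∈ attachSets m d n g, hitProb m d Z (n + 1) (attachStep g (n + 1) S) := by
  refine tendsto_nhds_unique ((hZ.tendsto_probAfter hd h).comp (tendsto_add_atTop_nat 1)) ?_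
  simp only [Function.comp_def, probAfter, Finset.expect_eq_sum_div_card]
  exact (tendsto_finsetSum _ fun S hS => hZ.tendsto_probAfter hd (h.attach hS)).div_const _

-- Backward induction along a submartingale: `R i g x` certifies the value `x` at step `i`, and
-- every certified value is dominated by the average of values that are certified or reached one
-- step later.
theorem Persistent.le_hitProb_of_certificate (hd : 2 * m < d) (hZ : Persistent m d Z) {T : ℕ}
    {R : ℕ → SimpleGraph ℕ → ℝ → Prop}
    (hlast : ∀ g x, UAReachable m d (n + T) g → R T g x → x ≤ hitProb m d Z (n + T) g)
    (hstep : ∀ i < T, ∀ g x, UAReachable m d (n + i) g → R i g x →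
      ∃ ψ : Finset ℕ → ℝ, x ≤ 𝔼 S ∈ attachSets m d (n + i) g, ψ S ∧
        ∀ S ∈ attachSets m d (n + i) g,
          R (i + 1) (attachStep g (n + i + 1) S) (ψ S) ∨
            ψ S ≤ hitProb m d Z (n + i + 1) (attachStep g (n + i + 1) S))
    {x : ℝ} (h : UAReachable m d n g) (hx : R 0 g x) : x ≤ hitProb m d Z n g := by
  suffices hall : ∀ i ≤ T, ∀ g x, UAReachable m d (n + i) g → R i g x →
      x ≤ hitProb m d Z (n + i) g from hall 0 T.zero_le g x h hx
  intro i hi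
  induction hi using Nat.decreasingInduction with
  | self => exact hlast
  | of_succ i hi ih =>
    intro g x h hx
    obtain ⟨ψ, hle, hψ⟩ := hstep i hi g x h hx
    rw [hZ.hitProb_eq_expect hd h]
    refine hle.trans (Finset.expect_le_expect fun S hS => ?_)
    exact (hψ S hS).elim (ih _ _ (h.attach hS)) id

end Hitting

section Limit

variable {m d n : ℕ} {Ω : Type*} [MeasurableSpace Ω] {μ : Measure Ω} [IsProbabilityMeasure μ]
  {G : ℕ → Ω → SimpleGraph ℕ} {Z Z' : Set (SimpleGraph ℕ)}

theorem IsUAProcess.lawMean_probAfter_le (hd : 2 * m < d) (hG : IsUAProcess m d μ G)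
    (hn : m ≤ n) (k : ℕ) :
    lawMean m d μ G n (probAfter m d Z k n) ≤ lawMean m d μ G (n + k) (Z.indicator 1) := by
  induction k generalizing n with
  | zero => exact le_rfl
  | succ k ih =>
    calc lawMean m d μ G n (probAfter m d Z (k + 1) n)
        ≤ lawMean m d μ G (n + 1) (probAfter m d Z k (n + 1)) :=
          hG.lawMean_expect_le (by omega) hn fun g hg => (hg.probAfter_mem_Icc hd k).1
      _ ≤ lawMean m d μ G (n + 1 + k) (Z.indicator 1) := ih (by omega)
      _ = lawMean m d μ G (n + (k + 1)) (Z.indicator 1) := by rw [Nat.add_right_comm, add_assoc]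

theorem IsUAProcess.lawMean_hitProb_le (hd : 2 * m < d) (hG : IsUAProcess m d μ G)
    (hZ : Persistent m d Z) (hn : m ≤ n) {A : ℝ}
    (hA : ∀ k, lawMean m d μ G (n + k) (Z.indicator 1) ≤ A) :
    lawMean m d μ G n (hitProb m d Z n) ≤ A := by
  have hlim : Tendsto (fun k => lawMean m d μ G n (probAfter m d Z k n)) atTop
      (𝓝 (lawMean m d μ G n (hitProb m d Z n))) :=
    tendsto_finsetSum _ fun g hg =>
      (hZ.tendsto_probAfter hd (mem_reachableGraphs.1 hg)).const_mul _
  exact le_of_tendsto' hlim fun k => (hG.lawMean_probAfter_le hd hn k).trans (hA k)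

theorem IsUAProcess.lawMean_indicator_le_succ (hd : 2 * m < d) (hG : IsUAProcess m d μ G)
    (hZ : Persistent m d Z) (hn : m ≤ n) :
    lawMean m d μ G n (Z.indicator 1) ≤ lawMean m d μ G (n + 1) (Z.indicator 1) :=
  (lawMean_mono fun _ hg => hZ.probAfter_le_succ hd hg 0).trans
    (hG.lawMean_probAfter_le hd hn 1)

-- The limit `A` of `P(G n ∈ Z)` satisfies `A ≥ (1 - ε) A + ε`.
theorem IsUAProcess.tendsto_lawMean_indicator (hd : 2 * m < d) (hG : IsUAProcess m d μ G)
    (hZ : Persistent m d Z)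
    (hZ' : Tendsto (fun n => lawMean m d μ G n (Z'.indicator 1)) atTop (𝓝 1))
    {ε : ℝ} (hε : 0 < ε)
    (hhit : ∀ᶠ n in atTop, ∀ g, UAReachable m d n g → g ∈ Z' → ε ≤ hitProb m d Z n g) :
    Tendsto (fun n => lawMean m d μ G n (Z.indicator 1)) atTop (𝓝 1) := by
  wlog hε1 : ε ≤ 1 generalizing ε
  · exact this zero_lt_one
      (hhit.mono fun n hn g hg hgZ => (not_le.1 hε1).le.trans (hn g hg hgZ)) le_rfl
  set a : ℕ → ℝ := fun n => lawMean m d μ G n (Z.indicator 1) with ha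
  have hmono : Monotone fun i => a (i + m) := monotone_nat_of_le_succ fun i => by
    simpa only [Nat.add_right_comm] using hG.lawMean_indicator_le_succ hd hZ (Nat.le_add_left m i)
  have hbdd : BddAbove (Set.range fun i => a (i + m)) :=
    ⟨1, by rintro _ ⟨i, rfl⟩; exact hG.lawMean_indicator_le_one Z⟩
  set A := ⨆ i, a (i + m)
  have hlim : Tendsto a atTop (𝓝 A) :=
    (tendsto_add_atTop_iff_nat m).1 (tendsto_atTop_ciSup hmono hbdd)
  have hkey : ∀ᶠ n in atTop, (1 - ε) * a n + ε * lawMean m d μ G n (Z'.indicator 1) ≤ A := by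
    filter_upwards [hhit, eventually_ge_atTop m] with n hhit hnm
    refine le_trans ?_ (hG.lawMean_hitProb_le hd hZ hnm fun k => ?_)
    · rw [ha, ← lawMean_add_mul]
      refine lawMean_mono fun g hg => ?_
      by_cases hgZ : g ∈ Z
      · rw [hZ.hitProb_of_mem hd hg hgZ]
        by_cases hgZ' : g ∈ Z' <;> simp [hgZ, hgZ', hε.le]
      · by_cases hgZ' : g ∈ Z'
        · simpa [hgZ, hgZ'] using hhit g hg hgZ'
        · simpa [hgZ, hgZ'] using hZ.hitProb_nonneg hd hg
    · simpa [ha, show n + k - m + m = n + k by omega] using le_ciSup hbdd (n + k - m)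
  have hA : (1 - ε) * A + ε * 1 ≤ A :=
    le_of_tendsto ((hlim.const_mul _).add (hZ'.const_mul _)) hkey
  have hA1 : A ≤ 1 := le_of_tendsto' hlim fun n => hG.lawMean_indicator_le_one Z
  rwa [show A = 1 from le_antisymm hA1 (by nlinarith)] at hlim

end Limit

/-! ### Unicyclic graphs -/

section Unicyclic

open Classical in
/-- The sum of the degrees of the subgraph of `U` induced on `D`. -/
noncomputable def innerDegSum {V : Type*} (U : SimpleGraph V) (D : Finset V) : ℕ :=
  ∑ u ∈ D, (D.filter (U.Adj u)).card

variable {V : Type*} {U : SimpleGraph V}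

open Classical in
theorem innerDegSum_insert [DecidableEq V] {D : Finset V} {v : V} (hv : v ∉ D) :
    innerDegSum U (insert v D) = innerDegSum U D + 2 * (D.filter (U.Adj v)).card := by
  have h1 : ∀ u ∈ D, ((insert v D).filter (U.Adj u)).card =
      (D.filter (U.Adj u)).card + if U.Adj v u then 1 else 0 := by
    intro u _
    rw [Finset.filter_insert]
    simp only [U.adj_comm v u]
    split_ifs with h
    · rw [Finset.card_insert_of_notMem (by simp [hv])]
    · rfl
  rw [innerDegSum, Finset.sum_insert hv, Finset.sum_congr rfl h1, Finset.sum_add_distrib,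
    Finset.filter_insert, if_neg (U.loopless.irrefl v), ← Finset.card_filter, innerDegSum]
  ring

theorem exists_adj_of_connected [Fintype V] (hU : U.Connected) {D : Finset V} (hD : D.Nonempty)
    (hne : D ≠ Finset.univ) : ∃ b ∈ D, ∃ v ∉ D, U.Adj b v := by
  by_contra! hcon
  obtain ⟨b, hb⟩ := hD
  refine hne (Finset.eq_univ_iff_forall.2 fun v => ?_)
  obtain ⟨p⟩ := hU.preconnected b v
  induction p with
  | nil => exact hb
  | cons h _ ih => exact ih (by_contra fun hv => hcon _ hb _ hv h)

open Classical in
theorem innerDegSum_le [Fintype V] (hU : U.Connected) (he : U.edgeSet.ncard ≤ Fintype.card V)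
    {D : Finset V} (hD : D.Nonempty) : innerDegSum U D ≤ 2 * D.card := by
  induction hq : Dᶜ.card generalizing D with
  | zero =>
    have : D = Finset.univ := by simpa using hq
    subst this
    rw [← SimpleGraph.coe_edgeFinset, Set.ncard_coe_finset] at he
    calc innerDegSum U Finset.univ = ∑ u, U.degree u := Finset.sum_congr rfl fun u _ => by
          rw [← SimpleGraph.card_neighborFinset_eq_degree, SimpleGraph.neighborFinset_eq_filter]
      _ = 2 * U.edgeFinset.card := U.sum_degrees_eq_twice_card_edges
      _ ≤ 2 * Finset.univ.card := by rw [Finset.card_univ]; gcongr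
  | succ q ih =>
    have hne : D ≠ Finset.univ := by rintro rfl; simp at hq
    obtain ⟨b, hb, v, hv, hbv⟩ := exists_adj_of_connected hU hD hne
    have hc : (insert v D)ᶜ.card = q := by
      rw [Finset.compl_insert, Finset.card_erase_of_mem (by simpa using hv), hq]
      rfl
    have h1 := ih (Finset.insert_nonempty v D) hc
    rw [innerDegSum_insert hv, Finset.card_insert_of_notMem hv] at h1
    have h2 : 0 < (D.filter (U.Adj v)).card :=
      Finset.card_pos.2 ⟨b, Finset.mem_filter.2 ⟨hb, hbv.symm⟩⟩
    omega

/-- The subgraph of `U` induced on `D` has at least as many edges as vertices; for a unicyclic `U`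
and nonempty `D` this says that `D` is connected and contains the cycle. -/
def CarriesCycle (U : SimpleGraph V) (D : Finset V) : Prop := 2 * D.card ≤ innerDegSum U D

namespace CarriesCycle

theorem eq_of_adj [Fintype V] (hU : U.Connected) (he : U.edgeSet.ncard ≤ Fintype.card V)
    {D : Finset V} (hD : CarriesCycle U D) {v b b' : V} (hv : v ∉ D) (hb : b ∈ D) (hb' : b' ∈ D)
    (h : U.Adj v b) (h' : U.Adj v b') : b' = b := by
  classical
  have h1 := innerDegSum_le hU he (Finset.insert_nonempty v D)
  rw [innerDegSum_insert hv, Finset.card_insert_of_notMem hv] at h1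
  rw [CarriesCycle] at hD
  have h2 : (D.filter (U.Adj v)).card ≤ 1 := by omega
  exact Finset.card_le_one.1 h2 b' (Finset.mem_filter.2 ⟨hb', h'⟩) b (Finset.mem_filter.2 ⟨hb, h⟩)

protected theorem insert [DecidableEq V] {D : Finset V}
    (hD : CarriesCycle U D) {v b : V} (hv : v ∉ D) (hb : b ∈ D) (h : U.Adj v b) :
    CarriesCycle U (insert v D) := by
  classical
  have h2 : 0 < (D.filter (U.Adj v)).card :=
    Finset.card_pos.2 ⟨b, Finset.mem_filter.2 ⟨hb, h⟩⟩
  rw [CarriesCycle] at hD ⊢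
  rw [innerDegSum_insert hv, Finset.card_insert_of_notMem hv]
  omega

theorem exists_adj [Fintype V] (hU : U.Connected)
    (he : U.edgeSet.ncard ≤ Fintype.card V) {D : Finset V}
    (hD : CarriesCycle U D) {b : V} (hb : b ∈ D) : ∃ u ∈ D, U.Adj b u := by
  classical
  by_contra! hcon
  have h1 := innerDegSum_insert (U := U) (Finset.notMem_erase b D)
  have h0 : ((D.erase b).filter (U.Adj b)).card = 0 := by
    rw [Finset.card_eq_zero, Finset.filter_eq_empty_iff]
    exact fun u hu => hcon u (Finset.mem_of_mem_erase hu)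
  rw [Finset.insert_erase hb, h0] at h1
  have hcard := Finset.card_erase_add_one hb
  rw [CarriesCycle] at hD
  rcases (D.erase b).eq_empty_or_nonempty with hemp | hne
  · have : innerDegSum U (D.erase b) = 0 := by rw [hemp]; simp [innerDegSum]
    omega
  · have := innerDegSum_le hU he hne
    omega

end CarriesCycle

/-- `c 0, …, c (ℓ - 1)` are, in this order, the vertices of a cycle of `U`; only the values
`c 0, …, c ℓ` matter. -/
structure IsCycleEnum (U : SimpleGraph V) (ℓ : ℕ) (c : ℕ → V) : Prop where
  three_le : 3 ≤ ℓ
  inj : ∀ i < ℓ, ∀ j < ℓ, c i = c j → i = j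
  adj : ∀ i < ℓ, U.Adj (c i) (c (i + 1))
  close : c ℓ = c 0

theorem HasCycleOfLength.exists_enum {ℓ : ℕ} (h : HasCycleOfLength U ℓ) :
    ∃ c : ℕ → V, IsCycleEnum U ℓ c := by
  obtain ⟨v, c, hc, rfl⟩ := h
  refine ⟨c.getVert, hc.three_le_length, fun i hi j hj hij => ?_, fun i hi => ?_, by simp⟩
  · exact hc.getVert_injOn' (by grind) (by grind) hij
  · exact c.adj_getVert_succ hi

open Classical in
/-- The set of the first `i` vertices of an enumeration. -/
noncomputable def prefixSet (c : ℕ → V) (i : ℕ) : Finset V := (Finset.range i).image c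

theorem mem_prefixSet {c : ℕ → V} {i : ℕ} {v : V} : v ∈ prefixSet c i ↔ ∃ j < i, c j = v := by
  simp [prefixSet]

theorem prefixSet_succ [DecidableEq V] (c : ℕ → V) (i : ℕ) :
    prefixSet c (i + 1) = insert (c i) (prefixSet c i) := by
  ext v
  simp only [mem_prefixSet, Finset.mem_insert, Nat.lt_succ_iff_lt_or_eq]
  grind

theorem IsCycleEnum.notMem_prefixSet {ℓ : ℕ} {c : ℕ → V} (hc : IsCycleEnum U ℓ c) {i j : ℕ}
    (hij : i ≤ j) (hj : j < ℓ) : c j ∉ prefixSet c i := by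
  rw [mem_prefixSet]
  rintro ⟨k, hk, hck⟩
  have := hc.inj k (by omega) j hj hck
  omega

theorem IsCycleEnum.succ_mem {ℓ : ℕ} {c : ℕ → V} (hc : IsCycleEnum U ℓ c) {i : ℕ} (hi : i < ℓ) :
    c (i + 1) ∈ prefixSet c ℓ := by
  have := hc.three_le
  rw [mem_prefixSet]
  by_cases h : i + 1 = ℓ
  · exact ⟨0, by omega, by rw [h, hc.close]⟩
  · exact ⟨i + 1, by omega, rfl⟩

theorem IsCycleEnum.pred_ne_succ {ℓ : ℕ} {c : ℕ → V} (hc : IsCycleEnum U ℓ c) {i : ℕ}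
    (hi : i + 1 < ℓ) : c i ≠ c (i + 2) := by
  have := hc.three_le
  intro h
  by_cases h' : i + 2 = ℓ
  · rw [h', hc.close] at h
    have := hc.inj i (by omega) 0 (by omega) h
    omega
  · have := hc.inj i (by omega) (i + 2) (by omega) h
    omega

theorem IsCycleEnum.exists_two_adj {ℓ : ℕ} {c : ℕ → V} (hc : IsCycleEnum U ℓ c) {u : V}
    (hu : u ∈ prefixSet c ℓ) :
    ∃ a ∈ prefixSet c ℓ, ∃ b ∈ prefixSet c ℓ, a ≠ b ∧ U.Adj u a ∧ U.Adj u b := by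
  have h3 := hc.three_le
  obtain ⟨i, hi, rfl⟩ := mem_prefixSet.1 hu
  rcases i with _ | i
  · refine ⟨c 1, hc.succ_mem (by omega), c (ℓ - 1), mem_prefixSet.2 ⟨ℓ - 1, by omega, rfl⟩,
      fun h => ?_, hc.adj 0 (by omega), ?_⟩
    · have := hc.inj 1 (by omega) (ℓ - 1) (by omega) h
      omega
    · have := hc.adj (ℓ - 1) (by omega)
      rw [Nat.sub_add_cancel (by omega), hc.close] at this
      exact this.symm
  · exact ⟨c i, mem_prefixSet.2 ⟨i, by omega, rfl⟩, c (i + 2), hc.succ_mem hi,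
      hc.pred_ne_succ hi, (hc.adj i (by omega)).symm, hc.adj (i + 1) hi⟩

theorem IsCycleEnum.two_le_ncard_neighborSet [Finite V] {ℓ : ℕ} {c : ℕ → V}
    (hc : IsCycleEnum U ℓ c) {u : V} (hu : u ∈ prefixSet c ℓ) :
    2 ≤ (U.neighborSet u).ncard := by
  obtain ⟨a, -, b, -, hab, hua, hub⟩ := hc.exists_two_adj hu
  exact (Set.one_lt_ncard (Set.toFinite _)).2 ⟨a, hua, b, hub, hab⟩

open Classical in
theorem IsCycleEnum.two_le_inner {ℓ : ℕ} {c : ℕ → V} (hc : IsCycleEnum U ℓ c) {u : V}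
    (hu : u ∈ prefixSet c ℓ) : 2 ≤ ((prefixSet c ℓ).filter (U.Adj u)).card := by
  obtain ⟨a, ha, b, hb, hab, hua, hub⟩ := hc.exists_two_adj hu
  exact Finset.one_lt_card.2 ⟨a, Finset.mem_filter.2 ⟨ha, hua⟩, b, Finset.mem_filter.2 ⟨hb, hub⟩,
    hab⟩

theorem IsCycleEnum.carriesCycle {ℓ : ℕ} {c : ℕ → V} (hc : IsCycleEnum U ℓ c) :
    CarriesCycle U (prefixSet c ℓ) := by
  classical
  calc 2 * (prefixSet c ℓ).card = ∑ u ∈ prefixSet c ℓ, 2 := by simp [mul_comm]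
    _ ≤ _ := Finset.sum_le_sum fun u hu => hc.two_le_inner hu

theorem IsCycleEnum.eq_or_eq_of_adj [Fintype V] (hU : U.Connected)
    (he : U.edgeSet.ncard ≤ Fintype.card V) {ℓ : ℕ} {c : ℕ → V} (hc : IsCycleEnum U ℓ c)
    {i : ℕ} (hi : i + 1 < ℓ) {u : V} (hu : u ∈ prefixSet c ℓ) (h : U.Adj (c (i + 1)) u) :
    u = c i ∨ u = c (i + 2) := by
  classical
  by_contra! hcon
  have hmem : c (i + 1) ∈ prefixSet c ℓ := hc.succ_mem (by omega)
  have h3 : 2 < ((prefixSet c ℓ).filter (U.Adj (c (i + 1)))).card := by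
    rw [Finset.two_lt_card]
    refine ⟨c i, ?_, c (i + 2), ?_, u, ?_, hc.pred_ne_succ hi, hcon.1.symm, hcon.2.symm⟩
    · exact Finset.mem_filter.2 ⟨mem_prefixSet.2 ⟨i, by omega, rfl⟩, (hc.adj i (by omega)).symm⟩
    · exact Finset.mem_filter.2 ⟨hc.succ_mem hi, hc.adj (i + 1) hi⟩
    · exact Finset.mem_filter.2 ⟨hu, h⟩
  have hlt : ∑ u ∈ prefixSet c ℓ, 2 < innerDegSum U (prefixSet c ℓ) :=
    Finset.sum_lt_sum (fun u hu => hc.two_le_inner hu) ⟨_, hmem, h3⟩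
  have hle := innerDegSum_le hU he ⟨_, hmem⟩
  rw [Finset.sum_const, smul_eq_mul] at hlt
  omega

end Unicyclic

/-! ### Past trees -/

/-- `PastTree m g h P w T`: the neighbourhood of `w` in `g` outside `P` starts, down to depth `h`,
as an `m`-ary tree with vertices in `T`, none of which but those at depth `h` has further
neighbours. In the process, `P` is empty or consists of the unique younger neighbour of `w`. -/
inductive PastTree (m : ℕ) (g : SimpleGraph ℕ) : ℕ → Set ℕ → ℕ → Finset ℕ → Prop
  | leaf {P : Set ℕ} {w : ℕ} {T : Finset ℕ} : w ∈ T → PastTree m g 0 P w T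
  | node {h : ℕ} {P : Set ℕ} {w : ℕ} {T : Finset ℕ} (C : Finset ℕ) (W : ℕ → Finset ℕ)
      (root_mem : w ∈ T) (card_children : C.card = m) (neighborSet_eq : g.neighborSet w = P ∪ C)
      (subset : ∀ c ∈ C, W c ⊆ T) (root_notMem : ∀ c ∈ C, w ∉ W c)
      (disjoint : (C : Set ℕ).PairwiseDisjoint W)
      (subtree : ∀ c ∈ C, PastTree m g h {w} c (W c)) : PastTree m g (h + 1) P w T

namespace PastTree

variable {m h n : ℕ} {g g' : SimpleGraph ℕ} {P : Set ℕ} {w : ℕ} {T S : Finset ℕ}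

theorem root_mem (hT : PastTree m g h P w T) : w ∈ T := by
  cases hT <;> assumption

theorem pred (hT : PastTree m g (h + 1) P w T) : PastTree m g h P w T := by
  induction h generalizing P w T with
  | zero => exact .leaf hT.root_mem
  | succ h ih =>
    obtain _ | ⟨C, W, hw, hC, hN, hsub, hwW, hdisj, hch⟩ := hT
    exact .node C W hw hC hN hsub hwW hdisj fun c hc => ih (hch c hc)

theorem of_le {h' : ℕ} (hT : PastTree m g h P w T) (hle : h' ≤ h) : PastTree m g h' P w T := by
  induction hle with
  | refl => exact hT
  | step _ ih => exact ih hT.pred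

theorem congr (hT : PastTree m g h P w T)
    (hg : ∀ v ∈ T, g'.neighborSet v = g.neighborSet v) : PastTree m g' h P w T := by
  induction hT with
  | leaf hw => exact .leaf hw
  | node C W hw hC hN hsub hwW hdisj _ ih =>
    exact .node C W hw hC ((hg _ hw).trans hN) hsub hwW hdisj
      fun c hc => ih c hc fun v hv => hg v (hsub c hc hv)

theorem insert_parent {x : ℕ} (hT : PastTree m g h ∅ w T)
    (hw : g'.neighborSet w = insert x (g.neighborSet w))
    (hg : ∀ v ∈ T, v ≠ w → g'.neighborSet v = g.neighborSet v) : PastTree m g' h {x} w T := by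
  obtain hwT | ⟨C, W, hwT, hC, hN, hsub, hwW, hdisj, hch⟩ := hT
  · exact .leaf hwT
  · refine .node C W hwT hC ?_ hsub hwW hdisj fun c hc => (hch c hc).congr fun v hv =>
      hg v (hsub c hc hv) (ne_of_mem_of_not_mem hv (hwW c hc))
    rw [hw, hN, Set.empty_union, Set.singleton_union]

theorem attachStep_of_disjoint (hT : PastTree m g h P w T) (hTn : T ⊆ Finset.Icc 1 n)
    (hTS : Disjoint T S) : PastTree m (attachStep g (n + 1) S) h P w T :=
  hT.congr fun _ hv => neighborSet_attachStep_of_notMem (Finset.disjoint_left.1 hTS hv)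
    (ne_of_mem_of_not_mem (hTn hv) (by simp))

theorem attachStep_of_root_mem (hT : PastTree m g h ∅ w T) (hTn : T ⊆ Finset.Icc 1 n)
    (hSn : S ⊆ Finset.Icc 1 n) (hw : w ∈ S) (hTS : ∀ v ∈ T, v ∈ S → v = w) :
    PastTree m (attachStep g (n + 1) S) h {n + 1} w T :=
  hT.insert_parent (neighborSet_attachStep_of_mem hSn hw) fun v hv hvw =>
    neighborSet_attachStep_of_notMem (fun hvS => hvw (hTS v hv hvS))
      (ne_of_mem_of_not_mem (hTn hv) (by simp))

theorem graphDeg_le (hT : PastTree m g (h + 1) P w T) : graphDeg g w ≤ P.ncard + m := by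
  obtain _ | ⟨C, W, -, rfl, hN, -⟩ := hT
  rw [graphDeg, hN, ← Set.ncard_coe_finset C]
  exact Set.ncard_union_le P C

theorem exists_adj (hT : PastTree m g (h + 1) P w T) (hm : m ≠ 0) : ∃ c ∈ T, g.Adj w c := by
  obtain _ | ⟨C, W, -, rfl, hN, hsub, -, -, hch⟩ := hT
  obtain ⟨c, hc⟩ := Finset.card_ne_zero.1 hm
  exact ⟨c, hsub c hc (hch c hc).root_mem, show c ∈ g.neighborSet w by rw [hN]; exact Or.inr hc⟩

end PastTree

/-- A family of disjoint past trees of depth `h` inside `[n]`, each with at most `K` vertices and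
with a root of degree less than `d`: `R` is the set of roots and `W r` contains the vertices of the
tree rooted at `r`. -/
structure TreeFamily (m d n : ℕ) (g : SimpleGraph ℕ) (h K : ℕ) (R : Finset ℕ) (W : ℕ → Finset ℕ) :
    Prop where
  tree : ∀ r ∈ R, PastTree m g h ∅ r (W r)
  subset_Icc : ∀ r ∈ R, W r ⊆ Finset.Icc 1 n
  subset_lowDegSet : R ⊆ lowDegSet d g n
  card_le : ∀ r ∈ R, (W r).card ≤ K
  disjoint : (R : Set ℕ).PairwiseDisjoint W

namespace TreeFamily

variable {m d n h h' K : ℕ} {g : SimpleGraph ℕ} {R R' S : Finset ℕ} {W : ℕ → Finset ℕ}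

theorem empty : TreeFamily m d n g h K ∅ W := by
  constructor <;> simp

theorem root_mem (hF : TreeFamily m d n g h K R W) {r : ℕ} (hr : r ∈ R) : r ∈ W r :=
  (hF.tree r hr).root_mem

theorem mono (hF : TreeFamily m d n g h K R W) (hR : R' ⊆ R) : TreeFamily m d n g h K R' W where
  tree r hr := hF.tree r (hR hr)
  subset_Icc r hr := hF.subset_Icc r (hR hr)
  subset_lowDegSet := hR.trans hF.subset_lowDegSet
  card_le r hr := hF.card_le r (hR hr)
  disjoint := hF.disjoint.subset hR

theorem of_le (hF : TreeFamily m d n g h K R W) (hle : h' ≤ h) : TreeFamily m d n g h' K R W where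
  tree r hr := (hF.tree r hr).of_le hle
  subset_Icc := hF.subset_Icc
  subset_lowDegSet := hF.subset_lowDegSet
  card_le := hF.card_le
  disjoint := hF.disjoint

theorem eq_of_mem (hF : TreeFamily m d n g h K R W) {r r' x : ℕ} (hr : r ∈ R) (hr' : r' ∈ R)
    (hx : x ∈ W r) (hx' : x ∈ W r') : r = r' :=
  hF.disjoint.elim_finset hr hr' x hx hx'

theorem eq_of_root_mem (hF : TreeFamily m d n g h K R W) {r x : ℕ} (hr : r ∈ R) (hx : x ∈ R)
    (hxr : x ∈ W r) : x = r :=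
  hF.eq_of_mem hx hr (hF.root_mem hx) hxr

theorem card_le_card_filter_disjoint_add (hF : TreeFamily m d n g h K R W) (X : Finset ℕ) :
    R.card ≤ (R.filter fun r => Disjoint (W r) X).card + X.card := by
  rw [← Finset.card_filter_add_card_filter_not (s := R) fun r => Disjoint (W r) X]
  refine Nat.add_le_add_left ?_ _
  have hmeet : ∀ r ∈ R.filter fun r => ¬ Disjoint (W r) X, ∃ x ∈ X, x ∈ W r := by
    intro r hr
    obtain ⟨x, hxr, hxX⟩ := Finset.not_disjoint_iff.1 (Finset.mem_filter.1 hr).2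
    exact ⟨x, hxX, hxr⟩
  choose! f hfX hfW using hmeet
  exact Finset.card_le_card_of_injOn f hfX fun r hr r' hr' hrr' =>
    hF.eq_of_mem (Finset.mem_filter.1 hr).1 (Finset.mem_filter.1 hr').1 (hfW r hr)
      (hrr' ▸ hfW r' hr')

theorem filter_disjoint_attachStep (hF : TreeFamily m d n g h K R W) (S : Finset ℕ) :
    TreeFamily m d (n + 1) (attachStep g (n + 1) S) h K (R.filter fun r => Disjoint (W r) S) W := by
  have hF' := hF.mono (Finset.filter_subset (fun r => Disjoint (W r) S) R)
  have hIcc : Finset.Icc 1 n ⊆ Finset.Icc 1 (n + 1) := Finset.Icc_subset_Icc_right (by omega)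
  refine ⟨fun r hr => ?_, fun r hr => (hF'.subset_Icc r hr).trans hIcc, fun r hr => ?_,
    hF'.card_le, hF'.disjoint⟩
  · exact (hF'.tree r hr).attachStep_of_disjoint (hF'.subset_Icc r hr) (Finset.mem_filter.1 hr).2
  · obtain ⟨hrn, hrd⟩ := mem_lowDegSet.1 (hF'.subset_lowDegSet hr)
    have hrS : r ∉ S := Finset.disjoint_left.1 (Finset.mem_filter.1 hr).2 (hF'.root_mem hr)
    rw [mem_lowDegSet, graphDeg, neighborSet_attachStep_of_notMem hrS
      (ne_of_mem_of_not_mem hrn (by simp))]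
    exact ⟨hIcc hrn, hrd⟩

theorem insert (hF : TreeFamily m d n g h K R W) {r : ℕ} {T : Finset ℕ}
    (htree : PastTree m g h ∅ r T) (hTn : T ⊆ Finset.Icc 1 n) (hr : r ∈ lowDegSet d g n)
    (hTK : T.card ≤ K) (hdisj : ∀ q ∈ R, Disjoint T (W q)) :
    TreeFamily m d n g h K (insert r R) (Function.update W r T) := by
  have hne : ∀ q ∈ R, q ≠ r := by
    rintro _ hq rfl
    exact Finset.disjoint_left.1 (hdisj _ hq) htree.root_mem (hF.root_mem hq)
  have hW : ∀ q ∈ R, Function.update W r T q = W q := fun q hq =>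
    Function.update_of_ne (hne q hq) ..
  refine ⟨?_, ?_, Finset.insert_subset hr hF.subset_lowDegSet, ?_, ?_⟩
  · rw [Finset.forall_mem_insert, Function.update_self]
    exact ⟨htree, fun q hq => hW q hq ▸ hF.tree q hq⟩
  · rw [Finset.forall_mem_insert, Function.update_self]
    exact ⟨hTn, fun q hq => hW q hq ▸ hF.subset_Icc q hq⟩
  · rw [Finset.forall_mem_insert, Function.update_self]
    exact ⟨hTK, fun q hq => hW q hq ▸ hF.card_le q hq⟩
  · rw [Finset.coe_insert, Set.pairwiseDisjoint_insert]
    refine ⟨fun q hq q' hq' hqq' => ?_, fun q hq _ => ?_⟩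
    · simpa only [Function.onFun, hW q hq, hW q' hq'] using hF.disjoint hq hq' hqq'
    · rw [Function.update_self, hW q hq]
      exact hdisj q hq

theorem pastTree_attachStep (hF : TreeFamily m d n g h K S W) (hg : SupportedOn n g)
    (hS : S.card = m) :
    PastTree m (attachStep g (n + 1) S) (h + 1) ∅ (n + 1)
      (Insert.insert (n + 1) (S.biUnion W)) := by
  have hSn : S ⊆ Finset.Icc 1 n := fun r hr => hF.subset_Icc r hr (hF.root_mem hr)
  refine .node S W (Finset.mem_insert_self ..) hS ?_
    (fun r hr => (Finset.subset_biUnion_of_mem W hr).trans (Finset.subset_insert ..))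
    (fun r hr hn => ?_) hF.disjoint fun r hr => ?_
  · rw [neighborSet_attachStep_new hg hSn, Set.empty_union]
  · exact absurd (hF.subset_Icc r hr hn) (by simp)
  · exact (hF.tree r hr).attachStep_of_root_mem (hF.subset_Icc r hr) hSn hr
      fun _ hv hvS => hF.eq_of_root_mem hr hvS hv

theorem card_insert_biUnion_le (hF : TreeFamily m d n g h K S W) (hS : S.card = m) (x : ℕ) :
    (Insert.insert x (S.biUnion W)).card ≤ 1 + m * K := by
  refine (Finset.card_insert_le ..).trans ?_
  rw [add_comm, ← hS]
  exact Nat.add_le_add_left (Finset.card_biUnion_le_card_mul S W K hF.card_le) 1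

theorem insert_attachStep (hF : TreeFamily m d n g h K S W) (hg : SupportedOn n g)
    (hS : S.card = m) (hd : m < d) {Y : Finset ℕ} {W' : ℕ → Finset ℕ} {K' : ℕ}
    (hY : TreeFamily m d n g (h + 1) K' Y W') (hK : 1 + m * K ≤ K')
    (hYS : ∀ y ∈ Y, ∀ r ∈ S, Disjoint (W' y) (W r)) :
    TreeFamily m d (n + 1) (attachStep g (n + 1) S) (h + 1) K' (Insert.insert (n + 1) Y)
      (Function.update W' (n + 1) (Insert.insert (n + 1) (S.biUnion W))) := by
  have hSn : S ⊆ Finset.Icc 1 n := fun r hr => hF.subset_Icc r hr (hF.root_mem hr)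
  have hIcc : Finset.Icc 1 n ⊆ Finset.Icc 1 (n + 1) := Finset.Icc_subset_Icc_right (by omega)
  have hYS' : ∀ y ∈ Y, Disjoint (W' y) S := fun y hy =>
    Finset.disjoint_right.2 fun r hr => Finset.disjoint_right.1 (hYS y hy r hr) (hF.root_mem hr)
  have hY' := hY.filter_disjoint_attachStep S
  rw [Finset.filter_true_of_mem hYS'] at hY'
  refine hY'.insert (hF.pastTree_attachStep hg hS) ?_ ?_
    ((hF.card_insert_biUnion_le hS _).trans hK) fun y hy => ?_
  · exact Finset.insert_subset (by simp)
      (Finset.biUnion_subset.2 fun r hr => (hF.subset_Icc r hr).trans hIcc)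
  · rw [mem_lowDegSet, graphDeg_attachStep_new hg hSn, hS]
    exact ⟨by simp, hd⟩
  · rw [Finset.disjoint_insert_left, Finset.disjoint_biUnion_left]
    exact ⟨fun hy' => absurd (hY.subset_Icc y hy hy') (by simp), fun r hr => (hYS y hy r hr).symm⟩

end TreeFamily

/-! ### Partial copies -/

/-- The vertices of `g` outside `φ '' D` to which `φ` may have to be extended: those adjacent to
the image of a non-leaf vertex of `U` belonging to `D`. -/
def pendingRoots {V : Type*} (g : SimpleGraph ℕ) (U : SimpleGraph V) (D : Finset V) (φ : V → ℕ) :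
    Set ℕ :=
  {r | r ∉ φ '' D ∧ ∃ u ∈ D, 2 ≤ (U.neighborSet u).ncard ∧ g.Adj (φ u) r}

/-- `φ` embeds the subgraph of `U` induced on `D` into `g`; an edge of `g` between images has to
come from `U` if one of its ends is the image of a non-leaf vertex of `U`. -/
structure LocalEmbedding {V : Type*} (g : SimpleGraph ℕ) (U : SimpleGraph V) (D : Finset V)
    (φ : V → ℕ) : Prop where
  inj : Set.InjOn φ D
  map_adj : ∀ u ∈ D, ∀ v ∈ D, U.Adj u v → g.Adj (φ u) (φ v)
  of_adj : ∀ u ∈ D, 2 ≤ (U.neighborSet u).ncard → ∀ v ∈ D, g.Adj (φ u) (φ v) → U.Adj u v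

/-- A local embedding into `X` such that from each pending root `r` hangs a past tree of depth `h`
with vertices in `W r`. -/
structure PartialCopy {V : Type*} (m : ℕ) (g : SimpleGraph ℕ) (U : SimpleGraph V) (h : ℕ)
    (D : Finset V) (φ : V → ℕ) (W : ℕ → Finset ℕ) (X : Set ℕ) : Prop
    extends LocalEmbedding g U D φ where
  image_subset : φ '' D ⊆ X
  tree : ∀ u ∈ D, 2 ≤ (U.neighborSet u).ncard → ∀ r, r ∉ φ '' D → g.Adj (φ u) r →
    PastTree m g h {φ u} r (W r)
  subset : ∀ r ∈ pendingRoots g U D φ, (W r : Set ℕ) ⊆ X \ φ '' D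
  disjoint : (pendingRoots g U D φ).PairwiseDisjoint W

/-- A copy in `g` of the subgraph of `U` induced on `D` without pending roots: in `g`, the image of
a non-leaf vertex of `U` only has neighbours that come from `U`. -/
structure ClosedCopy {V : Type*} (g : SimpleGraph ℕ) (U : SimpleGraph V) (D : Finset V)
    (φ : V → ℕ) : Prop where
  inj : Set.InjOn φ D
  map_adj : ∀ u ∈ D, ∀ v ∈ D, U.Adj u v → g.Adj (φ u) (φ v)
  exists_of_adj : ∀ u ∈ D, 2 ≤ (U.neighborSet u).ncard → ∀ r, g.Adj (φ u) r →
    ∃ v ∈ D, U.Adj u v ∧ φ v = r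

section PartialCopies

variable {V : Type*} {m n h h' d : ℕ} {g g' : SimpleGraph ℕ} {U : SimpleGraph V} {D : Finset V}
  {φ : V → ℕ} {W T : ℕ → Finset ℕ} {X X' : Set ℕ} {S : Finset ℕ}

theorem image_update_insert [DecidableEq V] {v : V} (hv : v ∉ D) (x : ℕ) :
    Function.update φ v x '' (insert v D : Finset V) = insert x (φ '' D) := by
  rw [Finset.coe_insert, Set.image_insert_eq, Function.update_self]
  congr 1
  exact Set.image_congr fun u hu => Function.update_of_ne (ne_of_mem_of_not_mem hu hv) ..

theorem mem_of_adj_of_notMem_image {v : V} {x r : ℕ} {C : Set ℕ}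
    (hN : g.neighborSet x = φ '' {u | u ∈ D ∧ U.Adj v u} ∪ C) (hr : r ∉ φ '' D)
    (hxr : g.Adj x r) : r ∈ C := by
  rw [← SimpleGraph.mem_neighborSet, hN] at hxr
  exact hxr.resolve_left fun ⟨u, hu, hur⟩ => hr ⟨u, hu.1, hur⟩

theorem pendingRoots_insert_subset [DecidableEq V] {v : V} (hv : v ∉ D) {x : ℕ} {C : Set ℕ}
    (hN : g'.neighborSet x = φ '' {u | u ∈ D ∧ U.Adj v u} ∪ C)
    (hadj : ∀ u ∈ D, ∀ y ≠ x, g'.Adj (φ u) y ↔ g.Adj (φ u) y) :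
    pendingRoots g' U (insert v D) (Function.update φ v x) ⊆
      C ∪ pendingRoots g U D φ \ {x} := by
  rintro r ⟨hr, u, hu, hdeg, hur⟩
  rw [image_update_insert hv, Set.mem_insert_iff, not_or] at hr
  obtain rfl | hu := Finset.mem_insert.1 hu
  · rw [Function.update_self] at hur
    exact Or.inl (mem_of_adj_of_notMem_image hN hr.2 hur)
  · rw [Function.update_of_ne (ne_of_mem_of_not_mem hu hv), hadj u hu r hr.1] at hur
    exact Or.inr ⟨⟨hr.2, u, hu, hdeg, hur⟩, hr.1⟩

theorem LocalEmbedding.insert [DecidableEq V] (hφ : LocalEmbedding g U D φ) {v : V} (hv : v ∉ D)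
    {x : ℕ} (hx : x ∉ φ '' D) {C : Set ℕ} (hC : Disjoint C (φ '' D))
    (hN : g'.neighborSet x = φ '' {u | u ∈ D ∧ U.Adj v u} ∪ C)
    (hadj : ∀ u ∈ D, ∀ y ≠ x, g'.Adj (φ u) y ↔ g.Adj (φ u) y) :
    LocalEmbedding g' U (insert v D) (Function.update φ v x) := by
  have hup : ∀ u ∈ D, Function.update φ v x u = φ u := fun u hu =>
    Function.update_of_ne (ne_of_mem_of_not_mem hu hv) ..
  have hupv : Function.update φ v x v = x := Function.update_self ..
  have hxadj : ∀ u ∈ D, g'.Adj x (φ u) ↔ U.Adj v u := by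
    intro u hu
    rw [← SimpleGraph.mem_neighborSet, hN]
    constructor
    · rintro (⟨u', ⟨hu', hvu'⟩, h⟩ | hC')
      · rwa [← hφ.inj hu' hu h]
      · exact absurd ⟨u, hu, rfl⟩ (Set.disjoint_left.1 hC hC')
    · exact fun hvu => Or.inl ⟨u, ⟨hu, hvu⟩, rfl⟩
  have hne : ∀ u ∈ D, φ u ≠ x := fun u hu h => hx ⟨u, hu, h⟩
  refine ⟨?_, ?_, ?_⟩
  · rw [Finset.coe_insert, Set.injOn_insert (by simpa using hv), hupv]
    refine ⟨fun u hu u' hu' h => hφ.inj hu hu' (by rwa [hup u hu, hup u' hu'] at h), ?_⟩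
    rintro ⟨u, hu, hux⟩
    exact hne u hu (hup u hu ▸ hux)
  · simp only [Finset.forall_mem_insert, hupv, SimpleGraph.irrefl, false_implies, true_and]
    refine ⟨fun u hu huv => ?_, fun u hu => ⟨fun huv => ?_, fun u' hu' huu' => ?_⟩⟩
    · rw [hup u hu, hxadj u hu]; exact huv
    · rw [hup u hu, g'.adj_comm, hxadj u hu]; exact huv.symm
    · rw [hup u hu, hup u' hu', hadj u hu _ (hne u' hu')]; exact hφ.map_adj u hu u' hu' huu'
  · simp only [Finset.forall_mem_insert, hupv, SimpleGraph.irrefl, false_implies, true_and]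
    refine ⟨fun _ u hu => ?_, fun u hu hdeg => ⟨?_, fun u' hu' => ?_⟩⟩
    · rw [hup u hu, hxadj u hu]; exact id
    · rw [hup u hu, g'.adj_comm, hxadj u hu]; exact SimpleGraph.Adj.symm
    · rw [hup u hu, hup u' hu', hadj u hu _ (hne u' hu')]; exact hφ.of_adj u hu hdeg u' hu'

theorem pendingRoots_empty : pendingRoots g U ∅ φ = ∅ := by
  simp [pendingRoots]

theorem ClosedCopy.pendingRoots_eq_empty (hs : ClosedCopy g U D φ) :
    pendingRoots g U D φ = ∅ := by
  refine Set.eq_empty_iff_forall_notMem.2 ?_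
  rintro r ⟨hr, u, hu, hdeg, hur⟩
  obtain ⟨v, hv, -, rfl⟩ := hs.exists_of_adj u hu hdeg r hur
  exact hr ⟨v, hv, rfl⟩

theorem ClosedCopy.partialCopy (hs : ClosedCopy g U D φ) (m h : ℕ) (W : ℕ → Finset ℕ) :
    PartialCopy m g U h D φ W (φ '' D) where
  inj := hs.inj
  map_adj := hs.map_adj
  of_adj u hu hdeg v hv huv := by
    obtain ⟨v', hv', huv', h⟩ := hs.exists_of_adj u hu hdeg _ huv
    rwa [← hs.inj hv' hv h]
  image_subset := subset_rfl
  tree u hu hdeg r hr hur := by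
    obtain ⟨v, hv, -, rfl⟩ := hs.exists_of_adj u hu hdeg r hur
    exact absurd ⟨v, hv, rfl⟩ hr
  subset := by simp [hs.pendingRoots_eq_empty]
  disjoint := by simp [hs.pendingRoots_eq_empty]

theorem ClosedCopy.attachStep_of_disjoint (hs : ClosedCopy g U D φ)
    (hn : ∀ u ∈ D, φ u ∈ Finset.Icc 1 n) (hS : ∀ u ∈ D, φ u ∉ S) :
    ClosedCopy (attachStep g (n + 1) S) U D φ where
  inj := hs.inj
  map_adj u hu v hv huv := le_attachStep _ _ _ (hs.map_adj u hu v hv huv)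
  exists_of_adj u hu hdeg r hur := hs.exists_of_adj u hu hdeg r <| by
    have hN := neighborSet_attachStep_of_notMem (g := g) (hS u hu)
      (ne_of_mem_of_not_mem (hn u hu) (by simp : n + 1 ∉ Finset.Icc 1 n))
    rwa [← SimpleGraph.mem_neighborSet, ← hN]

namespace PartialCopy

theorem closedCopy (hs : PartialCopy m g U h D φ W X) (hempty : pendingRoots g U D φ = ∅) :
    ClosedCopy g U D φ where
  inj := hs.inj
  map_adj := hs.map_adj
  exists_of_adj u hu hdeg r hur := by
    have hr : r ∈ φ '' D := by_contra fun hr =>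
      Set.eq_empty_iff_forall_notMem.1 hempty r ⟨hr, u, hu, hdeg, hur⟩
    obtain ⟨v, hv, rfl⟩ := hr
    exact ⟨v, hv, hs.of_adj u hu hdeg v hv hur, rfl⟩

theorem root_mem (hs : PartialCopy m g U h D φ W X) {r : ℕ} (hr : r ∈ pendingRoots g U D φ) :
    r ∈ W r :=
  let ⟨hrD, u, hu, hdeg, hur⟩ := hr
  (hs.tree u hu hdeg r hrD hur).root_mem

theorem empty : PartialCopy m g U h ∅ φ W X := by
  refine ⟨⟨?_, ?_, ?_⟩, ?_, ?_, ?_, ?_⟩ <;> simp [pendingRoots_empty]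

theorem insert [DecidableEq V] (hs : PartialCopy m g U h D φ W X) {v : V} (hv : v ∉ D) {x : ℕ}
    (hx : x ∉ φ '' D) {C : Set ℕ} (hC : Disjoint C (φ '' D))
    (hN : g'.neighborSet x = φ '' {u | u ∈ D ∧ U.Adj v u} ∪ C)
    (hadj : ∀ u ∈ D, ∀ y ≠ x, g'.Adj (φ u) y ↔ g.Adj (φ u) y)
    (hX : Insert.insert x (φ '' D) ⊆ X') (htree : ∀ c ∈ C, PastTree m g' h' {x} c (T c))
    (htree' : ∀ r ∈ pendingRoots g U D φ, r ≠ x → ∀ p,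
      PastTree m g h {p} r (W r) → PastTree m g' h' {p} r (T r))
    (hsub : ∀ r ∈ C ∪ pendingRoots g U D φ \ {x}, (T r : Set ℕ) ⊆ X' \ Insert.insert x (φ '' D))
    (hdisj : (C ∪ pendingRoots g U D φ \ {x}).PairwiseDisjoint T) :
    PartialCopy m g' U h' (Insert.insert v D) (Function.update φ v x) T X' := by
  have himage := image_update_insert (φ := φ) hv x
  have hpending := pendingRoots_insert_subset (U := U) hv hN hadj
  refine ⟨hs.toLocalEmbedding.insert hv hx hC hN hadj, himage ▸ hX, ?_,
    fun r hr => himage ▸ hsub r (hpending hr), hdisj.subset hpending⟩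
  intro u hu hdeg r hr hur
  rw [himage, Set.mem_insert_iff, not_or] at hr
  obtain rfl | hu := Finset.mem_insert.1 hu
  · rw [Function.update_self] at hur ⊢
    exact htree r (mem_of_adj_of_notMem_image hN hr.2 hur)
  · rw [Function.update_of_ne (ne_of_mem_of_not_mem hu hv)] at hur ⊢
    rw [hadj u hu r hr.1] at hur
    exact htree' r ⟨hr.2, u, hu, hdeg, hur⟩ hr.1 _ (hs.tree u hu hdeg r hr.2 hur)

theorem insert_piecewise [DecidableEq V] (hs : PartialCopy m g U h D φ W X) {v : V} (hv : v ∉ D)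
    {x : ℕ} (hx : x ∉ φ '' D) {C : Finset ℕ}
    (hN : g'.neighborSet x = φ '' {u | u ∈ D ∧ U.Adj v u} ∪ C)
    (hadj : ∀ u ∈ D, ∀ y ≠ x, g'.Adj (φ u) y ↔ g.Adj (φ u) y)
    (hX : Insert.insert x (φ '' D) ⊆ X') (htree : ∀ c ∈ C, PastTree m g' h' {x} c (T c))
    (hsub : ∀ c ∈ C, (T c : Set ℕ) ⊆ X' \ Insert.insert x (φ '' D))
    (hdisj : (C : Set ℕ).PairwiseDisjoint T)
    (htree' : ∀ r ∈ pendingRoots g U D φ, r ≠ x → ∀ p,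
      PastTree m g h {p} r (W r) → PastTree m g' h' {p} r (W r))
    (hsub' : ∀ r ∈ pendingRoots g U D φ, r ≠ x → (W r : Set ℕ) ⊆ X' \ Insert.insert x (φ '' D))
    (hdisj' : ∀ r ∈ pendingRoots g U D φ, r ≠ x → ∀ c ∈ C, Disjoint (W r) (T c)) :
    PartialCopy m g' U h' (Insert.insert v D) (Function.update φ v x) (C.piecewise T W) X' := by
  have hT : ∀ c ∈ C, C.piecewise T W c = T c := fun c hc => Finset.piecewise_eq_of_mem C T W hc
  have hW : ∀ r ∈ pendingRoots g U D φ, r ≠ x → C.piecewise T W r = W r := fun r hr hrx =>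
    Finset.piecewise_eq_of_notMem C T W fun hrC =>
      Finset.disjoint_left.1 (hdisj' r hr hrx r hrC) (hs.root_mem hr) (htree r hrC).root_mem
  refine hs.insert hv hx (Set.disjoint_left.2 fun c hc hcD => ?_) hN hadj hX
    (fun c hc => hT c hc ▸ htree c hc) (fun r hr hrx p hp => hW r hr hrx ▸ htree' r hr hrx p hp)
    ?_ ?_
  · exact (hsub c hc (htree c hc).root_mem).2 (Or.inr hcD)
  · rintro r (hr | ⟨hr, hrx⟩)
    · exact hT r hr ▸ hsub r hr
    · exact hW r hr hrx ▸ hsub' r hr hrx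
  · rw [Set.pairwiseDisjoint_union]
    refine ⟨fun c hc c' hc' hne => ?_, fun r hr r' hr' hne => ?_, fun c hc r hr _ => ?_⟩
    · simpa only [Function.onFun, hT c hc, hT c' hc'] using hdisj hc hc' hne
    · simpa only [Function.onFun, hW r hr.1 hr.2, hW r' hr'.1 hr'.2]
        using hs.disjoint hr.1 hr'.1 hne
    · simpa only [hT c hc, hW r hr.1 hr.2] using (hdisj' r hr.1 hr.2 c hc).symm

theorem expand [DecidableEq V] (hs : PartialCopy m g U (h + 1) D φ W X) {b v : V} {r : ℕ}
    (hb : b ∈ D) (hdeg : 2 ≤ (U.neighborSet b).ncard) (hr : r ∉ φ '' D) (hbr : g.Adj (φ b) r)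
    (hv : v ∉ D) (hvb : U.Adj v b) (huniq : ∀ u ∈ D, U.Adj v u → u = b) :
    ∃ W', PartialCopy m g U h (Insert.insert v D) (Function.update φ v r) W' X := by
  have hpr : r ∈ pendingRoots g U D φ := ⟨hr, b, hb, hdeg, hbr⟩
  have hWX := hs.subset r hpr
  obtain _ | ⟨C, T, hrW, -, hN, hsub, hrT, hdisj, hch⟩ := hs.tree b hb hdeg r hr hbr
  have hnbr : {u | u ∈ D ∧ U.Adj v u} = {b} := by
    ext u
    exact ⟨fun hu => huniq u hu.1 hu.2, by rintro rfl; exact ⟨hb, hvb⟩⟩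
  have hTW : ∀ c ∈ C, (T c : Set ℕ) ⊆ W r := fun c hc => Finset.coe_subset.2 (hsub c hc)
  have hrW' : ∀ q ∈ pendingRoots g U D φ, q ≠ r → Disjoint (W q) (W r) := fun q hq hqr =>
    hs.disjoint hq hpr hqr
  refine ⟨C.piecewise T W, hs.insert_piecewise hv hr (by rw [hN, hnbr, Set.image_singleton])
    (fun _ _ _ _ => Iff.rfl) (Set.insert_subset (hWX hrW).1 hs.image_subset) hch
    (fun c hc x hx => ⟨(hWX (hTW c hc hx)).1, ?_⟩) hdisj (fun _ _ _ _ => PastTree.pred)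
    (fun q hq hqr x hx => ⟨(hs.subset q hq hx).1, ?_⟩)
    fun q hq hqr c hc => (hrW' q hq hqr).mono_right (hsub c hc)⟩
  · rintro (rfl | hxD)
    · exact hrT c hc hx
    · exact (hWX (hTW c hc hx)).2 hxD
  · rintro (rfl | hxD)
    · exact Finset.disjoint_left.1 (hrW' q hq hqr) hx hrW
    · exact (hs.subset q hq hx).2 hxD

/-- If all neighbours of `b` in `U` were in `D`, the image of `b` would have degree at least
`d + 1`. -/
theorem exists_adj_notMem (hs : PartialCopy m g U h D φ W X)
    (hfin : ∀ v, (g.neighborSet v).Finite) (hd : ∀ v, graphDeg g v ≤ d)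
    (hcomp : UnicyclicComplete U d) {b : V} {r : ℕ} (hb : b ∈ D)
    (hdeg : 2 ≤ (U.neighborSet b).ncard) (hr : r ∉ φ '' D) (hbr : g.Adj (φ b) r) :
    ∃ v ∉ D, U.Adj b v := by
  by_contra! hcon
  have hD : U.neighborSet b ⊆ D := fun v hbv => by_contra fun hv => hcon v hv hbv
  have hsub : Insert.insert r (φ '' U.neighborSet b) ⊆ g.neighborSet (φ b) := by
    refine Set.insert_subset hbr ?_
    rintro _ ⟨v, hbv, rfl⟩
    exact hs.map_adj b hb v (hD hbv) hbv
  have hcard := Set.ncard_le_ncard hsub (hfin _)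
  rw [Set.ncard_insert_of_notMem (fun hr' => hr (Set.image_mono hD hr'))
    ((hfin _).subset ((Set.subset_insert ..).trans hsub)), (hs.inj.mono hD).ncard_image,
    hcomp b hdeg] at hcard
  exact absurd (hd (φ b)) (by rw [graphDeg]; omega)

theorem exists_closedCopy [Fintype V] [DecidableEq V] (hU : U.Connected)
    (he : U.edgeSet.ncard ≤ Fintype.card V) (hcomp : UnicyclicComplete U d)
    (hfin : ∀ v, (g.neighborSet v).Finite) (hd : ∀ v, graphDeg g v ≤ d)
    (hs : PartialCopy m g U h D φ W X) (hh : Dᶜ.card ≤ h) (hD : CarriesCycle U D) :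
    ∃ D' φ', D ⊆ D' ∧ Set.EqOn φ' φ D ∧ CarriesCycle U D' ∧ ClosedCopy g U D' φ' := by
  induction h generalizing D φ W with
  | zero =>
    refine ⟨D, φ, subset_rfl, fun _ _ => rfl, hD, hs.closedCopy ?_⟩
    refine Set.eq_empty_iff_forall_notMem.2 fun r ⟨hr, b, hb, hdeg, hbr⟩ => ?_
    obtain ⟨v, hv, -⟩ := hs.exists_adj_notMem hfin hd hcomp hb hdeg hr hbr
    exact absurd (Finset.card_pos.2 ⟨v, Finset.mem_compl.2 hv⟩) (by omega)
  | succ h ih =>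
    obtain hempty | ⟨r, hr, b, hb, hdeg, hbr⟩ := (pendingRoots g U D φ).eq_empty_or_nonempty
    · exact ⟨D, φ, subset_rfl, fun _ _ => rfl, hD, hs.closedCopy hempty⟩
    obtain ⟨v, hv, hbv⟩ := hs.exists_adj_notMem hfin hd hcomp hb hdeg hr hbr
    obtain ⟨W', hs'⟩ := hs.expand hb hdeg hr hbr hv hbv.symm
      fun u hu hvu => hD.eq_of_adj hU he hv hb hu hbv.symm hvu
    have hcard : (Insert.insert v D)ᶜ.card ≤ h := by
      rw [Finset.compl_insert, Finset.card_erase_of_mem (Finset.mem_compl.2 hv)]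
      omega
    obtain ⟨D', φ', hDD', hφ', hD', hs''⟩ := ih hs' hcard (hD.insert hv hb hbv.symm)
    refine ⟨D', φ', (Finset.subset_insert ..).trans hDD', fun u hu => ?_, hD', hs''⟩
    rw [hφ' (Finset.mem_insert_of_mem hu), Function.update_of_ne (ne_of_mem_of_not_mem hu hv)]

theorem attachStep [DecidableEq V] {K : ℕ} (hs : PartialCopy m g U h D φ W X)
    (hg : SupportedOn n g) (hX : X ⊆ (Finset.Icc 1 n : Finset ℕ)) {J : Finset ℕ}
    (hJ : TreeFamily m d n g h K J T) (hJX : ∀ r ∈ J, Disjoint (T r : Set ℕ) X)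
    {v : V} (hv : v ∉ D) (hS : (S : Set ℕ) = φ '' {u | u ∈ D ∧ U.Adj v u} ∪ J) :
    PartialCopy m (attachStep g (n + 1) S) U h (Insert.insert v D)
      (Function.update φ v (n + 1)) (J.piecewise T W) Set.univ := by
  have hn : ∀ x ∈ Finset.Icc 1 n, x ≠ n + 1 := fun x hx => ne_of_mem_of_not_mem hx (by simp)
  have hJn : ∀ r ∈ J, r ∈ Finset.Icc 1 n := fun r hr => hJ.subset_Icc r hr (hJ.root_mem hr)
  have hSn : S ⊆ Finset.Icc 1 n := by
    rw [← Finset.coe_subset, hS]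
    exact Set.union_subset ((Set.image_mono fun u hu => hu.1).trans (hs.image_subset.trans hX)) hJn
  have hSJ : ∀ x ∈ S, x ∈ φ '' D ∨ x ∈ J := by
    intro x hx
    rw [← Finset.mem_coe, hS] at hx
    exact hx.imp (fun ⟨u, hu, hux⟩ => ⟨u, hu.1, hux⟩) id
  refine hs.insert_piecewise hv (fun hx => hn _ (hX (hs.image_subset hx)) rfl)
    (by rw [neighborSet_attachStep_new hg hSn, hS]) (fun u hu y hy => ?_) (Set.subset_univ _)
    (fun r hr => ?_) (fun r hr x hx => ⟨trivial, ?_⟩) hJ.disjoint (fun r hr _ p hp => ?_)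
    (fun r hr _ x hx => ⟨trivial, ?_⟩) fun r hr _ c hc => ?_
  · have := hn _ (hX (hs.image_subset ⟨u, hu, rfl⟩))
    rw [attachStep_adj]
    tauto
  · refine (hJ.tree r hr).attachStep_of_root_mem (hJ.subset_Icc r hr) hSn
      (Finset.mem_coe.1 (hS ▸ Or.inr hr)) fun x hx hxS => ?_
    obtain hxD | hxJ := hSJ x hxS
    · exact absurd (hs.image_subset hxD) (Set.disjoint_left.1 (hJX r hr) hx)
    · exact hJ.eq_of_root_mem hr hxJ hx
  · rintro (rfl | hxD)
    · exact hn _ (hJ.subset_Icc r hr hx) rfl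
    · exact Set.disjoint_left.1 (hJX r hr) hx (hs.image_subset hxD)
  · refine hp.attachStep_of_disjoint (fun x hx => hX (hs.subset r hr hx).1)
      (Finset.disjoint_left.2 fun x hx hxS => ?_)
    obtain hxD | hxJ := hSJ x hxS
    · exact (hs.subset r hr hx).2 hxD
    · exact Set.disjoint_left.1 (hJX x hxJ) (hJ.root_mem hxJ) (hs.subset r hr hx).1
  · rintro (rfl | hxD)
    · exact hn _ (hX (hs.subset r hr hx).1) rfl
    · exact (hs.subset r hr hx).2 hxD
  · exact Finset.disjoint_right.2 fun x hx hxr =>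
      Set.disjoint_left.1 (hJX c hc) hx (hs.subset r hr hxr).1

end PartialCopy

theorem PastTree.exists_partialCopy_singleton (U : SimpleGraph V) {w : ℕ} {A : Finset ℕ}
    (hA : PastTree m g (h + 1) ∅ w A) (v : V) :
    ∃ W, PartialCopy m g U h {v} (fun _ => w) W A := by
  classical
  obtain _ | ⟨C, T, hwA, -, hN, hsub, hwT, hdisj, hch⟩ := hA
  have hs := (PartialCopy.empty (m := m) (g := g) (U := U) (h := h) (φ := fun _ => w) (W := T)
    (X := A)).insert_piecewise (X' := A) (h' := h) (T := T) (Finset.notMem_empty v) (x := w)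
    (by simp) (by simpa using hN) (by simp) (by simpa using hwA) hch
    (fun r hr x hx => ⟨hsub r hr hx, by rintro (rfl | hx'); exacts [hwT r hr hx, by simp at hx']⟩)
    hdisj (by simp [pendingRoots_empty]) (by simp [pendingRoots_empty])
    (by simp [pendingRoots_empty])
  exact ⟨_, by simpa only [insert_empty_eq, Function.update_eq_self] using hs⟩

/-- A past tree contains a path in which every vertex is older than the previous one, and the trees
hanging from that path: a partial copy of an arc of the cycle. -/
theorem PastTree.exists_partialCopy_prefixSet [Fintype V] (hm : m ≠ 0) (hU : U.Connected)
    (he : U.edgeSet.ncard ≤ Fintype.card V) {ℓ : ℕ} {c : ℕ → V} (hc : IsCycleEnum U ℓ c)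
    {w : ℕ} {A : Finset ℕ} (i : ℕ) (hi : i + 1 < ℓ) (hA : PastTree m g (h + (i + 1)) ∅ w A) :
    ∃ φ W, PartialCopy m g U h (prefixSet c (i + 1)) φ W A ∧ φ (c 0) = w ∧
      (∃ r ∉ φ '' prefixSet c (i + 1), g.Adj (φ (c i)) r) ∧ graphDeg g (φ (c i)) ≤ m + 1 := by
  classical
  induction i generalizing h with
  | zero =>
    obtain ⟨r, -, hwr⟩ := hA.exists_adj hm
    obtain ⟨W, hs⟩ := hA.exists_partialCopy_singleton U (c 0)
    refine ⟨fun _ => w, W, by simpa [prefixSet] using hs, rfl, ⟨r, ?_, hwr⟩, ?_⟩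
    · rintro ⟨_, -, rfl⟩
      exact hwr.ne rfl
    · have := hA.graphDeg_le
      rw [Set.ncard_empty] at this
      dsimp only
      omega
  | succ i ih =>
    obtain ⟨φ, W, hs, h0, ⟨r, hr, hir⟩, -⟩ := ih (h := h + 1) (by omega)
      (by rwa [show h + 1 + (i + 1) = h + (i + 1 + 1) by ring])
    have hmem : c i ∈ prefixSet c (i + 1) := mem_prefixSet.2 ⟨i, by omega, rfl⟩
    have hmem' : c i ∈ prefixSet c ℓ := mem_prefixSet.2 ⟨i, by omega, rfl⟩
    have hdeg := hc.two_le_ncard_neighborSet hmem'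
    have hv := hc.notMem_prefixSet le_rfl (by omega : i + 1 < ℓ)
    have hA := hs.tree (c i) hmem hdeg r hr hir
    have hpr : r ∈ pendingRoots g U (prefixSet c (i + 1)) φ := ⟨hr, c i, hmem, hdeg, hir⟩
    obtain ⟨s, hsW, hrs⟩ := hA.exists_adj hm
    obtain ⟨W', hs'⟩ := hs.expand hmem hdeg hr hir hv (hc.adj i (by omega)).symm fun u hu hvu => by
      obtain ⟨j, hj, rfl⟩ := mem_prefixSet.1 hu
      refine (hc.eq_or_eq_of_adj hU he (by omega) (mem_prefixSet.2 ⟨j, by omega, rfl⟩)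
        hvu).resolve_right fun h => hc.notMem_prefixSet (by omega) hi (h ▸ hu)
    rw [prefixSet_succ]
    refine ⟨_, W', hs', ?_, ⟨s, ?_, by rwa [Function.update_self]⟩, ?_⟩
    · rwa [Function.update_of_ne (ne_of_mem_of_not_mem (mem_prefixSet.2 ⟨0, by omega, rfl⟩) hv)]
    · rw [image_update_insert hv, Set.mem_insert_iff, not_or]
      exact ⟨hrs.ne', (hs.subset r hpr hsW).2⟩
    · rw [Function.update_self, add_comm]
      simpa only [Set.ncard_singleton] using hA.graphDeg_le

end PartialCopies

/-! ### Counting copies -/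

/-- The edge sets of the copies of `U` in `g`. Unlike subgraphs of `g`, these can be compared for
different graphs `g`. -/
def copyEdgeSets {V : Type*} (g : SimpleGraph ℕ) (U : SimpleGraph V) : Set (Set (Sym2 ℕ)) :=
  Set.range fun f : U.Copy g => Sym2.map f '' U.edgeSet

/-- The edge sets of the copies of `U` in `g` that avoid the vertex `x`. -/
def copyEdgeSetsAvoiding {V : Type*} (g : SimpleGraph ℕ) (U : SimpleGraph V) (x : ℕ) :
    Set (Set (Sym2 ℕ)) :=
  {E ∈ copyEdgeSets g U | ∀ e ∈ E, x ∉ e}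

section Copies

variable {V : Type*} {n : ℕ} {g g' : SimpleGraph ℕ} {U : SimpleGraph V}

theorem copyEdgeSets_mono (h : g ≤ g') : copyEdgeSets g U ⊆ copyEdgeSets g' U := by
  rintro _ ⟨f, rfl⟩
  exact ⟨(SimpleGraph.Copy.ofLE g g' h).comp f, rfl⟩

theorem SupportedOn.finite_copy [Finite V] (hg : SupportedOn n g) (hU : ∀ u, ∃ v, U.Adj u v) :
    Finite (U.Copy g) := by
  have hmem (f : U.Copy g) (u : V) : f u ∈ Finset.Icc 1 n :=
    let ⟨_, huv⟩ := hU u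
    hg _ _ (f.toHom.map_adj huv)
  refine Finite.of_injective (β := V → Finset.Icc 1 n) (fun f u => ⟨f u, hmem f u⟩) fun f f' h => ?_
  exact SimpleGraph.Copy.ext fun u => congrArg Subtype.val (congrFun h u)

theorem SupportedOn.finite_copyEdgeSets [Finite V] (hg : SupportedOn n g)
    (hU : ∀ u, ∃ v, U.Adj u v) : (copyEdgeSets g U).Finite :=
  have := hg.finite_copy hU
  Set.finite_range _

theorem ncard_copyEdgeSetsAvoiding_mono [Finite V] (hU : ∀ u, ∃ v, U.Adj u v)
    (hg' : SupportedOn n g') (h : g ≤ g') (x : ℕ) :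
    (copyEdgeSetsAvoiding g U x).ncard ≤ (copyEdgeSetsAvoiding g' U x).ncard :=
  Set.ncard_le_ncard (fun _ hE => ⟨copyEdgeSets_mono h hE.1, hE.2⟩)
    ((hg'.finite_copyEdgeSets hU).subset fun _ hE => hE.1)

theorem ncard_copyEdgeSets_le_avoiding [Finite V] (hU : ∀ u, ∃ v, U.Adj u v)
    (hg : SupportedOn n g) (hg' : SupportedOn (n + 1) g') (h : g ≤ g') :
    (copyEdgeSets g U).ncard ≤ (copyEdgeSetsAvoiding g' U (n + 1)).ncard := by
  refine Set.ncard_le_ncard (fun E hE => ⟨copyEdgeSets_mono h hE, ?_⟩)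
    ((hg'.finite_copyEdgeSets hU).subset fun _ hE => hE.1)
  obtain ⟨f, rfl⟩ := hE
  rintro _ ⟨e, he, rfl⟩ hn
  obtain ⟨u, hu, hun⟩ := Sym2.mem_map.1 hn
  obtain ⟨v, rfl⟩ := hu
  simpa [hun] using hg _ _ (f.toHom.map_adj he)

theorem ClosedCopy.ncard_avoiding_lt [Fintype V] {φ : V → ℕ}
    (hs : ClosedCopy g U Finset.univ φ) (hU : ∀ u, ∃ v, U.Adj u v) (hg : SupportedOn n g) (b : V) :
    (copyEdgeSetsAvoiding g U (φ b)).ncard < (copyEdgeSets g U).ncard := by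
  let f : U.Copy g :=
    ⟨⟨φ, fun h => hs.map_adj _ (Finset.mem_univ _) _ (Finset.mem_univ _) h⟩, by
      simpa [Set.injOn_univ] using hs.inj⟩
  obtain ⟨v, hbv⟩ := hU b
  refine Set.ncard_lt_ncard (Set.ssubset_iff_of_subset (fun _ hE => hE.1) |>.2
    ⟨_, ⟨f, rfl⟩, fun hE => ?_⟩) (hg.finite_copyEdgeSets hU)
  exact hE.2 s(φ b, φ v) ⟨s(b, v), hbv, rfl⟩ (Sym2.mem_mk_left _ _)

theorem ncard_neighborSet_of_iso_coe {W : Type*} {G : SimpleGraph W} {H : G.Subgraph}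
    (e : U ≃g H.coe) (u : V) : (H.neighborSet (e u)).ncard = (U.neighborSet u).ncard :=
  (Nat.card_congr ((e.mapNeighborSet u).trans (SimpleGraph.Subgraph.coeNeighborSetEquiv _))).symm

end Copies

section UnicyclicCount

variable {t n d : ℕ} {g : SimpleGraph ℕ} {U : SimpleGraph (Fin t)}

-- A non-leaf vertex of a complete copy of `U` has the maximal degree `d` in the copy already.
theorem isMaxUnicyclicSubgraph_of_iso (hU : IsUnicyclic U) (hcomp : UnicyclicComplete U d)
    (hfin : ∀ v, (g.neighborSet v).Finite) (hdeg : ∀ v, graphDeg g v ≤ d) {H : g.Subgraph}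
    (e : U ≃g H.coe) : IsMaxUnicyclicSubgraph g H := by
  have hverts : H.verts.ncard = t := by
    rw [← Nat.card_coe_set_eq, ← Nat.card_congr e.toEquiv, Nat.card_fin]
  have hedges : H.edgeSet.ncard = t := by
    rw [← SimpleGraph.Subgraph.image_coe_edgeSet_coe,
      Set.ncard_image_of_injective _ (Sym2.map.injective Subtype.val_injective), ← hU.2]
    exact (Nat.card_congr e.mapEdgeSet).symm
  refine ⟨Finite.of_equiv _ e.toEquiv, e.connected_iff.1 hU.1, hedges.trans hverts.symm, ?_⟩
  intro u hu htwo w huw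
  obtain ⟨v, hv⟩ := e.surjective ⟨u, hu⟩
  obtain rfl : (e v : ℕ) = u := congrArg Subtype.val hv
  rw [ncard_neighborSet_of_iso_coe] at htwo
  have heq : H.neighborSet (e v) = g.neighborSet (e v) :=
    Set.eq_of_subset_of_ncard_le (H.neighborSet_subset _)
      ((hdeg _).trans_eq ((ncard_neighborSet_of_iso_coe e v).trans (hcomp v htwo)).symm) (hfin _)
  exact SimpleGraph.Subgraph.Adj.snd_mem (heq.ge huw : w ∈ H.neighborSet (e v))

theorem ncard_copyEdgeSets_le_unicyclicCount (hU : IsUnicyclic U) (hcomp : UnicyclicComplete U d)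
    (hU' : ∀ u, ∃ v, U.Adj u v) (hg : SupportedOn n g) (hdeg : ∀ v, graphDeg g v ≤ d) :
    (copyEdgeSets g U).ncard ≤ unicyclicCount g U := by
  have hT : {H : g.Subgraph | IsMaxUnicyclicSubgraph g H ∧ Nonempty (U ≃g H.coe)} =
      Set.range (SimpleGraph.Copy.toSubgraph (A := U)) := by
    rw [SimpleGraph.Copy.range_toSubgraph]
    exact Set.ext fun H => and_iff_right_of_imp fun ⟨e⟩ =>
      isMaxUnicyclicSubgraph_of_iso hU hcomp hg.finite_neighborSet hdeg e
  have := hg.finite_copy hU'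
  have hedge : copyEdgeSets g U = SimpleGraph.Subgraph.edgeSet ''
      Set.range (SimpleGraph.Copy.toSubgraph (A := U) (B := g)) := by
    rw [← Set.range_comp]
    exact congrArg Set.range (funext fun f => (SimpleGraph.Subgraph.edgeSet_map f.toHom ⊤).symm)
  rw [unicyclicCount, hT, hedge]
  exact Set.ncard_image_le (Set.finite_range _)

end UnicyclicCount

/-! ### Races and drifts -/

section Race

variable {m d n : ℕ} {g : SimpleGraph ℕ} {Z : Set (SimpleGraph ℕ)}

theorem UAReachable.stepProb_not_disjoint_le (hm : 1 ≤ m) (hd : 2 * m < d)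
    (h : UAReachable m d n g) (W : Finset ℕ) :
    stepProb m d n g (fun S => ¬ Disjoint W S) ≤ W.card * (m * d / n) := by
  classical
  calc stepProb m d n g (fun S => ¬ Disjoint W S)
      ≤ 𝔼 S ∈ attachSets m d n g, ∑ x ∈ W, (if x ∈ S then 1 else 0 : ℝ) := by
        refine Finset.expect_le_expect fun S _ => ?_
        split_ifs with hWS
        · obtain ⟨x, hxW, hxS⟩ := Finset.not_disjoint_iff.1 hWS
          exact (by simp [hxS] : (1 : ℝ) ≤ if x ∈ S then 1 else 0).trans
            (Finset.single_le_sum (f := fun x => (if x ∈ S then 1 else 0 : ℝ))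
              (fun _ _ => by positivity) hxW)
        · positivity
    _ = ∑ x ∈ W, stepProb m d n g (fun S => x ∈ S) := by
        rw [Finset.expect_sum_comm]
        exact Finset.sum_congr rfl fun x _ => Finset.expect_congr rfl fun S _ => by congr
    _ ≤ W.card * (m * d / n) := by
        simpa using Finset.sum_le_card_nsmul W _ _ fun x _ => h.stepProb_mem_le hm hd x

open Classical in
theorem UAReachable.le_expect_race (hd : 2 * m < d) (h : UAReachable m d n g)
    {good bad : Finset ℕ → Prop} {ε α β f : ℝ}
    (hf : 0 ≤ f) (hfε : f ≤ ε) (hgood : α ≤ stepProb m d n g good)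
    (hbad : stepProb m d n g bad ≤ β) :
    f + (ε - f) * α - f * β ≤ 𝔼 S ∈ attachSets m d n g,
      (f + (ε - f) * (if good S then 1 else 0) - f * (if bad S then 1 else 0)) := by
  rw [Finset.expect_sub_distrib, Finset.expect_add_distrib, ← Finset.mul_expect,
    ← Finset.mul_expect, Finset.expect_const (h.attachSets_nonempty hd)]
  exact sub_le_sub
    (add_le_add_right (mul_le_mul_of_nonneg_left hgood (sub_nonneg.2 hfε)) f)
    (mul_le_mul_of_nonneg_left hbad hf)

-- In each of `T` steps a good event of probability at least `α` wins `ε`, while a bad event of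
-- probability at most `β` ends the race; both together have expected number at most `1`.
theorem Persistent.le_hitProb_of_race (hd : 2 * m < d) (hZ : Persistent m d Z)
    {A : ℕ → SimpleGraph ℕ → Prop} {T : ℕ} {ε α β : ℝ} (hε : 0 ≤ ε) (hα : 0 ≤ α) (hβ : 0 ≤ β)
    (hT : T * (α + β) ≤ 1)
    (hstep : ∀ i < T, ∀ g, UAReachable m d (n + i) g → A i g → ∃ good bad : Finset ℕ → Prop,
      α ≤ stepProb m d (n + i) g good ∧ stepProb m d (n + i) g bad ≤ β ∧
      ∀ S ∈ attachSets m d (n + i) g,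
        (good S → ε ≤ hitProb m d Z (n + i + 1) (attachStep g (n + i + 1) S)) ∧
        (¬ bad S → A (i + 1) (attachStep g (n + i + 1) S)))
    (h : UAReachable m d n g) (hA : A 0 g) : ε * α * T / 2 ≤ hitProb m d Z n g := by
  classical
  refine hZ.le_hitProb_of_certificate hd (T := T)
    (R := fun i g x => x = ε * α * (T - i : ℝ) / 2 ∧ A i g) ?_ ?_ h ⟨by simp, hA⟩
  · rintro g x hg ⟨rfl, -⟩
    simpa using hZ.hitProb_nonneg hd hg
  · rintro i hi g x hg ⟨rfl, hAg⟩
    obtain ⟨good, bad, hgood, hbad, hS⟩ := hstep i hi g hg hAg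
    have hi' : (i : ℝ) + 1 ≤ T := mod_cast hi
    set f : ℝ := ε * α * (T - (i + 1)) / 2 with hf
    have hεα : 0 ≤ ε * α := mul_nonneg hε hα
    have hf0 : 0 ≤ f := by have := mul_nonneg hεα (sub_nonneg.2 hi'); linarith
    have hfT : f ≤ ε * α * T / 2 := by
      have := mul_nonneg hεα (by positivity : (0 : ℝ) ≤ i + 1)
      rw [hf]; linarith
    have hfε : f ≤ ε := by
      nlinarith [mul_le_mul_of_nonneg_left hT hε,
        mul_nonneg hε (mul_nonneg (Nat.cast_nonneg (α := ℝ) T) hβ)]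
    have hfαβ : f * (α + β) ≤ ε * α / 2 := by
      nlinarith [mul_le_mul_of_nonneg_right hfT (add_nonneg hα hβ),
        mul_le_mul_of_nonneg_left hT hεα]
    refine ⟨_, le_trans ?_ (hg.le_expect_race hd hf0 hfε hgood hbad), fun S hSg => ?_⟩
    · rw [hf] at hfαβ ⊢; linarith
    · by_cases hb : bad S
      · refine Or.inr ?_
        by_cases hs : good S
        · simpa [hb, hs] using (sub_le_self ε hf0).trans ((hS S hSg).1 hs)
        · simpa [hb, hs] using hZ.hitProb_nonneg hd (hg.attach hSg)
      · by_cases hs : good S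
        · exact Or.inr (by simpa [hb, hs] using (hS S hSg).1 hs)
        · exact Or.inl ⟨by simp [hb, hs, hf], (hS S hSg).2 hb⟩

end Race

/-- Here `A n g r` says that the graph `g` at time `n` offers `r` units of some resource. From
every such graph whose resource is linear in `n`, the process enters `Z` with probability bounded
away from zero. -/
def HitsFromLinear (m d : ℕ) (Z : Set (SimpleGraph ℕ)) (A : ℕ → SimpleGraph ℕ → ℕ → Prop) :
    Prop :=
  ∀ c : ℝ, 0 < c → ∃ ε : ℝ, 0 < ε ∧ ∀ᶠ n : ℕ in atTop, ∀ g r, UAReachable m d n g → A n g r →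
    c * n ≤ r → ε ≤ hitProb m d Z n g

theorem eventually_exists_nat_between {η : ℝ} (hη : 0 < η) :
    ∀ᶠ n : ℕ in atTop, ∃ T : ℕ, η * n / 2 ≤ T ∧ T ≤ η * n := by
  have hlim : Tendsto (fun n : ℕ => η * n) atTop atTop :=
    tendsto_natCast_atTop_atTop.const_mul_atTop hη
  filter_upwards [hlim.eventually_ge_atTop 1] with n hn
  have hfloor : (1 : ℝ) ≤ ⌊η * n⌋₊ := mod_cast Nat.le_floor (by simpa using hn)
  exact ⟨⌊η * n⌋₊, by linarith [Nat.lt_floor_add_one (η * n)], Nat.floor_le (by linarith)⟩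

theorem exists_time_scale (m : ℕ) {c s : ℝ} (hc : 0 < c) (hs : 0 < s) :
    ∃ η : ℝ, 0 < η ∧ η ≤ 1 ∧ m * η ≤ c / 2 ∧ η * s ≤ 1 := by
  refine ⟨min 1 (min (c / (2 * m + 1)) (1 / s)), by positivity, min_le_left _ _, ?_,
    (le_div_iff₀ hs).1 ((min_le_right _ _).trans (min_le_right _ _))⟩
  have hle : min 1 (min (c / (2 * m + 1)) (1 / s)) ≤ c / (2 * m + 1) :=
    (min_le_right _ _).trans (min_le_left _ _)
  have hmul := mul_le_mul_of_nonneg_left hle m.cast_nonneg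
  refine hmul.trans ?_
  rw [mul_div_assoc', div_le_div_iff₀ (by positivity) (by norm_num)]
  nlinarith

theorem le_resource {c η : ℝ} {m n i j r r' T : ℕ} (hη : η ≤ 1) (hηm : m * η ≤ c / 2)
    (hc : 0 < c) (hT : T ≤ η * n) (hi : i ≤ T) (hj : j ≤ i) (hr : c * n ≤ r)
    (hr' : r ≤ r' + m * i) : c / 4 * ((n + j : ℕ) : ℝ) ≤ r' := by
  have hi' : (i : ℝ) ≤ η * n := le_trans (mod_cast hi) hT
  have hn : (0 : ℝ) ≤ n := n.cast_nonneg
  have hj' : (j : ℝ) ≤ n :=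
    le_trans (mod_cast hj) (hi'.trans (by simpa using mul_le_mul_of_nonneg_right hη hn))
  have hmi : (m : ℝ) * i ≤ c / 2 * n :=
    (mul_le_mul_of_nonneg_left hi' m.cast_nonneg).trans
      (by simpa [mul_assoc] using mul_le_mul_of_nonneg_right hηm hn)
  have hr'' : (r : ℝ) ≤ r' + m * i := mod_cast hr'
  push_cast
  nlinarith [mul_le_mul_of_nonneg_left hj' hc.le]

theorem HitsFromLinear.of_race {m d : ℕ} (hd : 2 * m < d) {Z : Set (SimpleGraph ℕ)}
    (hZ : Persistent m d Z) {A B : ℕ → SimpleGraph ℕ → ℕ → Prop} (hB : HitsFromLinear m d Z B)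
    (hrace : ∀ c : ℝ, 0 < c → ∃ p : ℝ, 0 < p ∧ ∃ b : ℝ, 0 ≤ b ∧ ∀ᶠ n : ℕ in atTop, ∀ g r,
      UAReachable m d n g → A n g r → c * n ≤ r → ∃ good bad : Finset ℕ → Prop,
        p / n ≤ stepProb m d n g good ∧ stepProb m d n g bad ≤ b / n ∧
        ∀ S ∈ attachSets m d n g,
          (good S → ∃ r', r ≤ r' + m ∧ B (n + 1) (attachStep g (n + 1) S) r') ∧
          (¬ bad S → ∃ r', r ≤ r' + m ∧ A (n + 1) (attachStep g (n + 1) S) r')) :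
    HitsFromLinear m d Z A := by
  intro c hc
  obtain ⟨p, hp, b, hb, hAn⟩ := hrace (c / 4) (by positivity)
  obtain ⟨ε, hε, hBn⟩ := hB (c / 4) (by positivity)
  obtain ⟨η, hη0, hη1, hηm, hηpb⟩ := exists_time_scale m hc (show 0 < p + b by positivity)
  refine ⟨ε * p * η / 8, by positivity, ?_⟩
  filter_upwards [eventually_forall_ge_atTop.2 hAn, eventually_forall_ge_atTop.2 hBn,
    eventually_gt_atTop 0, eventually_exists_nat_between hη0] with n hAn hBn hn ⟨T, hTl, hTu⟩
  have hn' : (0 : ℝ) < n := mod_cast hn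
  have hTn : T ≤ n :=
    Nat.cast_le.1 (hTu.trans (by simpa using mul_le_mul_of_nonneg_right hη1 hn'.le))
  intro g r h hAg hr
  have hbound : ε * p * η / 8 ≤ ε * (p / (2 * n)) * T / 2 := by
    calc ε * p * η / 8 = ε * (p / (2 * n)) * (η * n / 2) / 2 := by field_simp; norm_num
      _ ≤ ε * (p / (2 * n)) * T / 2 := by gcongr
  have hT : T * (p / (2 * n) + b / n) ≤ 1 := by
    calc T * (p / (2 * n) + b / n) ≤ η * n * (p / n + b / n) := by gcongr; linarith
      _ = η * (p + b) := by field_simp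
      _ ≤ 1 := hηpb
  refine hbound.trans (hZ.le_hitProb_of_race hd (β := b / n)
    (A := fun i g => ∃ r', r ≤ r' + m * i ∧ A (n + i) g r') hε.le (by positivity) (by positivity)
    hT ?_ h ⟨r, by simp, hAg⟩)
  rintro i hi g hg ⟨r₁, hr₁, hAg⟩
  have hin : (n : ℝ) ≤ (n + i : ℕ) := by simp
  have hi2n : ((n + i : ℕ) : ℝ) ≤ 2 * n := by exact_mod_cast (by omega : n + i ≤ 2 * n)
  obtain ⟨good, bad, hgood, hbad, hS⟩ := hAn (n + i) (n.le_add_right i) g r₁ hg hAg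
    (le_resource hη1 hηm hc hTu hi.le le_rfl hr hr₁)
  refine ⟨good, bad, le_trans (by gcongr) hgood, hbad.trans (by gcongr), fun S hSg => ⟨fun hs => ?_,
    fun hs => ?_⟩⟩
  · obtain ⟨r₂, hr₂, hBg⟩ := (hS S hSg).1 hs
    exact hBn (n + i + 1) (by omega) _ r₂ (hg.attach hSg) hBg
      (le_resource hη1 hηm hc hTu hi (j := i + 1) le_rfl hr (by rw [Nat.mul_succ]; omega))
  · obtain ⟨r₂, hr₂, hAg⟩ := (hS S hSg).2 hs
    exact ⟨r₂, by rw [mul_add]; omega, hAg⟩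

theorem Persistent.le_hitProb_of_drift {m d n : ℕ} {g : SimpleGraph ℕ} {Z : Set (SimpleGraph ℕ)}
    (hd : 2 * m < d) (hZ : Persistent m d Z) {A : ℕ → SimpleGraph ℕ → ℕ → Prop} {T : ℕ} {ε δ : ℝ}
    (hT : 0 < T) (hε : 0 ≤ ε) (hδ : 0 ≤ δ)
    (hlast : ∀ g y, UAReachable m d (n + T) g → A T g y → δ * T / 2 ≤ y →
      ε ≤ hitProb m d Z (n + T) g)
    (hstep : ∀ i < T, ∀ g, ∀ y ≤ i, UAReachable m d (n + i) g → A i g y →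
      ∃ ψ : Finset ℕ → ℕ, y + δ ≤ 𝔼 S ∈ attachSets m d (n + i) g, (ψ S : ℝ) ∧
        ∀ S ∈ attachSets m d (n + i) g,
          ψ S ≤ y + 1 ∧ A (i + 1) (attachStep g (n + i + 1) S) (ψ S))
    (h : UAReachable m d n g) (hA : A 0 g 0) : ε * δ / 2 ≤ hitProb m d Z n g := by
  have hT' : (0 : ℝ) < T := mod_cast hT
  set val : ℕ → ℝ → ℝ := fun i y => ε / T * (y + (δ * (T - i) - δ * T / 2)) with hval
  refine hZ.le_hitProb_of_certificate hd (T := T)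
    (R := fun i g x => ∃ y ≤ i, x = val i y ∧ A i g y) ?_ ?_ h
    ⟨0, le_rfl, by simp only [hval]; field_simp; push_cast; ring, hA⟩
  · rintro g x hg ⟨y, hyT, rfl, hAg⟩
    by_cases hy : δ * T / 2 ≤ y
    · refine le_trans ?_ (hlast g y hg hAg hy)
      have hyT' : (y : ℝ) ≤ T := mod_cast hyT
      calc val T y ≤ ε / T * T := by
            refine mul_le_mul_of_nonneg_left ?_ (by positivity)
            linarith [mul_nonneg hδ hT'.le]
        _ = ε := div_mul_cancel₀ ε hT'.ne'
    · refine (mul_nonpos_of_nonneg_of_nonpos (by positivity) ?_).trans (hZ.hitProb_nonneg hd hg)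
      linarith
  · rintro i hi g x hg ⟨y, hyi, rfl, hAg⟩
    obtain ⟨ψ, hle, hψ⟩ := hstep i hi g y hyi hg hAg
    refine ⟨fun S => val (i + 1) (ψ S), ?_, fun S hS => Or.inl
      ⟨ψ S, (hψ S hS).1.trans (by omega), rfl, (hψ S hS).2⟩⟩
    calc val i y = ε / T * (y + δ + (δ * (T - (i + 1 : ℕ)) - δ * T / 2)) := by
          simp only [hval]; push_cast; ring
      _ ≤ ε / T * (𝔼 S ∈ attachSets m d (n + i) g, (ψ S : ℝ) +
            (δ * (T - (i + 1 : ℕ)) - δ * T / 2)) := by gcongr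
      _ = 𝔼 S ∈ attachSets m d (n + i) g, val (i + 1) (ψ S) := by
          simp only [hval]
          rw [← Finset.mul_expect, Finset.expect_add_distrib,
            Finset.expect_const (hg.attachSets_nonempty hd)]

-- The states `C n g y r` have a second counter `y` with positive drift, which starts at zero and
-- ends up being the resource of a state `B`.
theorem HitsFromLinear.of_drift {m d : ℕ} (hd : 2 * m < d) {Z : Set (SimpleGraph ℕ)}
    (hZ : Persistent m d Z) {A B : ℕ → SimpleGraph ℕ → ℕ → Prop}
    {C : ℕ → SimpleGraph ℕ → ℕ → ℕ → Prop} (hB : HitsFromLinear m d Z B)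
    (hfirst : ∀ n g r, A n g r → C n g 0 r) (hlast : ∀ n g y r, C n g y r → B n g y)
    (hdrift : ∀ c : ℝ, 0 < c → ∃ δ : ℝ, 0 < δ ∧ ∃ κ : ℝ, 0 < κ ∧ ∀ᶠ n : ℕ in atTop, ∀ g y r,
      UAReachable m d n g → C n g y r → c * n ≤ r → y ≤ κ * n →
      ∃ ψ : Finset ℕ → ℕ, y + δ ≤ 𝔼 S ∈ attachSets m d n g, (ψ S : ℝ) ∧
        ∀ S ∈ attachSets m d n g, ψ S ≤ y + 1 ∧
          ∃ r', r ≤ r' + m ∧ C (n + 1) (attachStep g (n + 1) S) (ψ S) r') :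
    HitsFromLinear m d Z A := by
  intro c hc
  obtain ⟨δ, hδ, κ, hκ, hCn⟩ := hdrift (c / 4) (by positivity)
  obtain ⟨η, hη0, hη1, hηm, hηκ⟩ := exists_time_scale m hc (inv_pos.2 hκ)
  replace hηκ : η ≤ κ := by rwa [← div_eq_mul_inv, div_le_one hκ] at hηκ
  obtain ⟨ε, hε, hBn⟩ := hB (δ * η / 8) (by positivity)
  refine ⟨ε * δ / 2, by positivity, ?_⟩
  filter_upwards [eventually_forall_ge_atTop.2 hCn, eventually_forall_ge_atTop.2 hBn,
    eventually_gt_atTop 0, eventually_exists_nat_between hη0] with n hCn hBn hn ⟨T, hTl, hTu⟩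
  have hn' : (0 : ℝ) < n := mod_cast hn
  have hTn : (T : ℝ) ≤ n := hTu.trans (by simpa using mul_le_mul_of_nonneg_right hη1 hn'.le)
  have hT : 0 < T := Nat.cast_pos.1 ((by positivity : 0 < η * n / 2).trans_le hTl)
  intro g r h hAg hr
  refine hZ.le_hitProb_of_drift hd
    (A := fun i g y => ∃ r', r ≤ r' + m * i ∧ C (n + i) g y r') hT hε.le hδ.le ?_ ?_ h
    ⟨r, by simp, hfirst n g r hAg⟩
  · rintro g y hg ⟨r', -, hCg⟩ hy
    refine hBn (n + T) (n.le_add_right T) g y hg (hlast _ _ _ _ hCg) (le_trans ?_ hy)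
    calc δ * η / 8 * ((n + T : ℕ) : ℝ) ≤ δ * η / 8 * (2 * n) := by gcongr; push_cast; linarith
      _ = δ * (η * n / 2) / 2 := by ring
      _ ≤ δ * T / 2 := by gcongr
  · rintro i hi g y hyi hg ⟨r₁, hr₁, hCg⟩
    have hyκ : (y : ℝ) ≤ κ * (n + i : ℕ) :=
      calc (y : ℝ) ≤ T := mod_cast hyi.trans hi.le
        _ ≤ η * n := hTu
        _ ≤ κ * (n + i : ℕ) := by gcongr; omega
    obtain ⟨ψ, hle, hψ⟩ := hCn (n + i) (n.le_add_right i) g y r₁ hg hCg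
      (le_resource hη1 hηm hc hTu hi.le le_rfl hr hr₁) hyκ
    refine ⟨ψ, hle, fun S hS => ⟨(hψ S hS).1, ?_⟩⟩
    obtain ⟨r₂, hr₂, hC'⟩ := (hψ S hS).2
    exact ⟨r₂, by rw [Nat.mul_succ]; omega, hC'⟩

/-! ### Trading deep trees for shallow ones -/

/-- Disjoint families of deep trees (roots `Y`, trees `V`) and of shallow trees (roots `F`,
trees `W`). -/
structure TreeConfig (m d n : ℕ) (g : SimpleGraph ℕ) (h K : ℕ) (Y : Finset ℕ) (V : ℕ → Finset ℕ)
    (F : Finset ℕ) (W : ℕ → Finset ℕ) : Prop where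
  deep : TreeFamily m d n g (h + 1) (1 + m * K) Y V
  shallow : TreeFamily m d n g h K F W
  disjoint : ∀ y ∈ Y, ∀ f ∈ F, Disjoint (V y) (W f)

/-- The resource of this state is a family of `r` disjoint past trees; the graph is in `Z`. -/
def HasTreeFamily (m d : ℕ) (Z : Set (SimpleGraph ℕ)) (h K n : ℕ) (g : SimpleGraph ℕ) (r : ℕ) :
    Prop :=
  g ∈ Z ∧ ∃ R W, TreeFamily m d n g h K R W ∧ R.card = r

section Descent

variable {m d n h K : ℕ} {g : SimpleGraph ℕ} {Y F S : Finset ℕ} {V W : ℕ → Finset ℕ}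

theorem TreeConfig.filter_disjoint_attachStep (hC : TreeConfig m d n g h K Y V F W) (S : Finset ℕ) :
    TreeConfig m d (n + 1) (attachStep g (n + 1) S) h K (Y.filter fun y => Disjoint (V y) S) V
      (F.filter fun f => Disjoint (W f) S) W where
  deep := hC.deep.filter_disjoint_attachStep S
  shallow := hC.shallow.filter_disjoint_attachStep S
  disjoint y hy f hf := hC.disjoint y (Finset.mem_filter.1 hy).1 f (Finset.mem_filter.1 hf).1

theorem TreeConfig.attachStep_of_subset (hC : TreeConfig m d n g h K Y V F W) (hg : SupportedOn n g)
    (hd : m < d) (hSF : S ⊆ F) (hS : S.card = m) :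
    TreeConfig m d (n + 1) (attachStep g (n + 1) S) h K (insert (n + 1) Y)
      (Function.update V (n + 1) (insert (n + 1) (S.biUnion W)))
      (F.filter fun f => Disjoint (W f) S) W := by
  refine ⟨(hC.shallow.mono hSF).insert_attachStep hg hS hd hC.deep le_rfl
    fun y hy r hr => hC.disjoint y hy r (hSF hr), hC.shallow.filter_disjoint_attachStep S, ?_⟩
  intro y hy f hf
  obtain ⟨hfF, hfS⟩ := Finset.mem_filter.1 hf
  obtain rfl | hyn := eq_or_ne y (n + 1)
  · rw [Function.update_self, Finset.disjoint_insert_left, Finset.disjoint_biUnion_left]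
    refine ⟨fun hn => absurd (hC.shallow.subset_Icc f hfF hn) (by simp), fun s hs => ?_⟩
    refine hC.shallow.disjoint (hSF hs) hfF ?_
    rintro rfl
    exact Finset.disjoint_left.1 hfS (hC.shallow.root_mem hfF) hs
  · rw [Function.update_of_ne hyn]
    exact hC.disjoint y (Finset.mem_of_mem_insert_of_ne hy hyn) f hfF

theorem TreeConfig.exists_attachStep (hC : TreeConfig m d n g h K Y V F W) (hg : SupportedOn n g)
    (hd : m < d) (hS : S.card = m) :
    ∃ Y' V', TreeConfig m d (n + 1) (attachStep g (n + 1) S) h K Y' V'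
      (F.filter fun f => Disjoint (W f) S) W ∧
      Y'.card = if S ⊆ F then Y.card + 1 else (Y.filter fun y => Disjoint (V y) S).card := by
  split_ifs with hSF
  · have hnY : n + 1 ∉ Y := fun hn => by simpa using hC.deep.subset_Icc _ hn (hC.deep.root_mem hn)
    exact ⟨_, _, hC.attachStep_of_subset hg hd hSF hS, Finset.card_insert_of_notMem hnY⟩
  · exact ⟨_, _, hC.filter_disjoint_attachStep S, rfl⟩

theorem TreeFamily.le_expect_card_filter_disjoint (hm : 1 ≤ m) (hd : 2 * m < d)
    (hg : UAReachable m d n g) (hF : TreeFamily m d n g h K F W) :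
    F.card - F.card * (K * (m * d / n) : ℝ) ≤
      𝔼 S ∈ attachSets m d n g, ((F.filter fun f => Disjoint (W f) S).card : ℝ) := by
  classical
  have hhit : ∀ f ∈ F, stepProb m d n g (fun S => ¬ Disjoint (W f) S) ≤ K * (m * d / n) :=
    fun f hf => (hg.stepProb_not_disjoint_le hm hd (W f)).trans
      (mul_le_mul_of_nonneg_right (mod_cast hF.card_le f hf) (by positivity))
  calc F.card - F.card * (K * (m * d / n) : ℝ)
      ≤ F.card - ∑ f ∈ F, stepProb m d n g (fun S => ¬ Disjoint (W f) S) :=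
        sub_le_sub_left (by simpa using Finset.sum_le_card_nsmul F _ _ hhit) _
    _ = 𝔼 S ∈ attachSets m d n g, ((F.filter fun f => Disjoint (W f) S).card : ℝ) := by
        have hcard : ∀ S, ((F.filter fun f => Disjoint (W f) S).card : ℝ) =
            F.card - ∑ f ∈ F, if ¬ Disjoint (W f) S then 1 else 0 := fun S => by
          rw [← Finset.card_filter_add_card_filter_not (s := F) fun f => Disjoint (W f) S,
            Finset.sum_boole, Nat.cast_add, add_sub_cancel_right]
        simp only [hcard, stepProb]
        rw [Finset.expect_sub_distrib, Finset.expect_const (hg.attachSets_nonempty hd),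
          Finset.expect_sum_comm]
        congr!

theorem TreeFamily.div_le_stepProb_subset (hd : 2 * m < d) (hg : UAReachable m d n g)
    (hn : 0 < n) (hF : TreeFamily m d n g h K F W) {p : ℝ} (hp : 0 ≤ p)
    (hcard : p * n ^ m ≤ F.card.choose m) : p ≤ stepProb m d n g (· ⊆ F) := by
  have := hg.div_pow_le_stepProb (p := (· ⊆ F)) hd hn (T := F.powersetCard m) (fun S hS => ?_)
    le_rfl hp (by rwa [Finset.card_powersetCard])
  · simpa using this
  · obtain ⟨hSF, hS⟩ := Finset.mem_powersetCard.1 hS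
    exact ⟨mem_attachSets.2 ⟨hSF.trans hF.subset_lowDegSet, hS⟩, hSF⟩

theorem TreeConfig.drift (hm : 1 ≤ m) (hd : 2 * m < d) (hg : UAReachable m d n g) (hn : 0 < n)
    (hC : TreeConfig m d n g h K Y V F W) {p : ℝ} (hp : 0 ≤ p)
    (hF : p * n ^ m ≤ F.card.choose m)
    (hY : Y.card * ((1 + m * K : ℕ) * (m * d)) ≤ p / 2 * n) :
    Y.card + p / 2 ≤ 𝔼 S ∈ attachSets m d n g,
      ((if S ⊆ F then Y.card + 1 else (Y.filter fun y => Disjoint (V y) S).card : ℕ) : ℝ) := by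
  have hloss := hC.deep.le_expect_card_filter_disjoint hm hd hg
  have hgain := hC.shallow.div_le_stepProb_subset hd hg hn hp hF
  have hloss' : Y.card * ((1 + m * K : ℕ) * (m * d / n)) ≤ p / 2 := by
    rw [← mul_div_assoc, ← mul_div_assoc]
    exact (div_le_iff₀ (mod_cast hn)).2 hY
  have hsum := add_le_add hloss hgain
  rw [stepProb, ← Finset.expect_add_distrib] at hsum
  refine le_trans (by linarith) (hsum.trans (Finset.expect_le_expect fun S _ => ?_))
  by_cases hSF : S ⊆ F
  · simpa [hSF] using Finset.card_filter_le Y _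
  · simp [hSF]

theorem HitsFromLinear.descend {Z Z' : Set (SimpleGraph ℕ)} (hm : 1 ≤ m) (hd : 2 * m < d)
    (hZ : Persistent m d Z) (hZ' : Persistent m d Z')
    (hdeep : HitsFromLinear m d Z (HasTreeFamily m d Z' (h + 1) (1 + m * K))) :
    HitsFromLinear m d Z (HasTreeFamily m d Z' h K) := by
  refine hdeep.of_drift hd hZ (C := fun n g y r => g ∈ Z' ∧ ∃ Y V F W,
    TreeConfig m d n g h K Y V F W ∧ Y.card = y ∧ F.card = r) ?_ ?_ fun c hc => ?_
  · rintro n g r ⟨hgZ, F, W, hF, hr⟩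
    exact ⟨hgZ, ∅, W, F, W, ⟨.empty, hF, by simp⟩, rfl, hr⟩
  · rintro n g y r ⟨hgZ, Y, V, F, W, hC, hy, -⟩
    exact ⟨hgZ, Y, V, hC.deep, hy⟩
  · obtain ⟨p, hp, N, hN⟩ := exists_mul_pow_le_choose hc m
    have hB : (0 : ℝ) < (1 + m * K : ℕ) * (m * d) :=
      mul_pos (mod_cast by omega) (mul_pos (mod_cast hm) (mod_cast by omega))
    refine ⟨p / 2, by positivity, p / 2 / ((1 + m * K : ℕ) * (m * d)), by positivity, ?_⟩
    filter_upwards [eventually_ge_atTop N, eventually_gt_atTop 0] with n hnN hn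
    rintro g _ _ hg ⟨hgZ, Y, V, F, W, hC, rfl, rfl⟩ hF hY
    rw [div_mul_eq_mul_div, le_div_iff₀ hB] at hY
    refine ⟨_, hC.drift hm hd hg hn hp.le (hN n hnN _ hF) hY, fun S hS => ⟨?_, ?_⟩⟩
    · split_ifs
      · exact le_rfl
      · exact (Finset.card_filter_le ..).trans (Nat.le_succ _)
    · have hSm := card_of_mem_attachSets hS
      obtain ⟨Y', V', hC', hY'⟩ := hC.exists_attachStep (hg.invariant (by omega)).supportedOn
        (by omega) hSm
      exact ⟨_, hSm ▸ hC.shallow.card_le_card_filter_disjoint_add S, hZ' n g hg hgZ S hS,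
        Y', V', _, W, hC', hY', rfl⟩

theorem HitsFromLinear.hasTreeFamily_zero {Z Z' : Set (SimpleGraph ℕ)} (hm : 1 ≤ m)
    (hd : 2 * m < d) (hZ : Persistent m d Z) (hZ' : Persistent m d Z') (h : ℕ)
    (hQ : ∀ K, HitsFromLinear m d Z (HasTreeFamily m d Z' h K)) (K : ℕ) :
    HitsFromLinear m d Z (HasTreeFamily m d Z' 0 K) := by
  induction h generalizing K with
  | zero => exact hQ K
  | succ h ih => exact ih (fun K => (hQ (1 + m * K)).descend hm hd hZ hZ') K

theorem treeFamily_singleton (m d n : ℕ) (g : SimpleGraph ℕ) :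
    TreeFamily m d n g 0 1 (lowDegSet d g n) singleton where
  tree _ _ := .leaf (Finset.mem_singleton_self _)
  subset_Icc _ hr := Finset.singleton_subset_iff.2 (lowDegSet_subset d g n hr)
  subset_lowDegSet := subset_rfl
  card_le r _ := (Finset.card_singleton r).le
  disjoint _ _ _ _ hne := Finset.disjoint_singleton.2 hne

theorem HitsFromLinear.eventually_le_hitProb {Z Z' : Set (SimpleGraph ℕ)} (hd : 2 * m < d)
    (hQ : HitsFromLinear m d Z (HasTreeFamily m d Z' 0 1)) :
    ∃ ε : ℝ, 0 < ε ∧ ∀ᶠ n : ℕ in atTop, ∀ g, UAReachable m d n g → g ∈ Z' →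
      ε ≤ hitProb m d Z n g := by
  have hd' : (0 : ℝ) < d := mod_cast (by omega : 0 < d)
  obtain ⟨ε, hε, hev⟩ := hQ (1 / d) (by positivity)
  refine ⟨ε, hε, hev.mono fun n hn g hg hgZ =>
    hn g _ hg ⟨hgZ, _, _, treeFamily_singleton m d n g, rfl⟩ ?_⟩
  rw [div_mul_eq_mul_div, one_mul, div_le_iff₀' hd']
  exact_mod_cast hg.le_mul_card_lowDegSet hd

end Descent

/-! ### Growing a copy around its cycle -/

theorem HitsFromLinear.of_or {m d : ℕ} {Z : Set (SimpleGraph ℕ)}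
    {A B C : ℕ → SimpleGraph ℕ → ℕ → Prop} (hA : HitsFromLinear m d Z A)
    (hB : HitsFromLinear m d Z B) (hC : ∀ n g r, C n g r → A n g r ∨ B n g r) :
    HitsFromLinear m d Z C := by
  intro c hc
  obtain ⟨ε, hε, hAn⟩ := hA c hc
  obtain ⟨ε', hε', hBn⟩ := hB c hc
  refine ⟨min ε ε', lt_min hε hε', ?_⟩
  filter_upwards [hAn, hBn] with n hAn hBn g r hg hCg hr
  exact (hC n g r hCg).elim (fun h => (min_le_left ..).trans (hAn g r hg h hr))
    fun h => (min_le_right ..).trans (hBn g r hg h hr)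

theorem persistent_le_ncard_copyEdgeSets {V : Type*} [Finite V] {m d : ℕ} {U : SimpleGraph V}
    (hd : m ≤ d) (hU' : ∀ u, ∃ v, U.Adj u v) (j : ℕ) :
    Persistent m d {g | j ≤ (copyEdgeSets g U).ncard} := fun _ _ hg hj _ hS =>
  hj.trans (Set.ncard_le_ncard (copyEdgeSets_mono (le_attachStep ..))
    (((hg.attach hS).invariant hd).supportedOn.finite_copyEdgeSets hU'))

/-- A closed copy of a part of `U` that carries the cycle and contains the vertex `x`, together with
a family of disjoint past trees and at least `j` copies of `U` avoiding `x`. The trees are deep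
enough for the rest of `U`. -/
structure GrowState {V : Type*} [Fintype V] (m d n : ℕ) (g : SimpleGraph ℕ) (K j : ℕ)
    (U : SimpleGraph V) (D : Finset V) (φ : V → ℕ) (x : ℕ) (R : Finset ℕ) (W : ℕ → Finset ℕ) :
    Prop where
  family : TreeFamily m d n g (Fintype.card V) K R W
  copy : ClosedCopy g U D φ
  core : CarriesCycle U D
  mem : x ∈ φ '' D
  count : j ≤ (copyEdgeSetsAvoiding g U x).ncard

/-- The resource of this state is the number `r` of past trees in a grow state whose copy lacks `q`
vertices of `U`. -/
def HasGrowState {V : Type*} [Fintype V] [DecidableEq V] (m d : ℕ) (U : SimpleGraph V) (K j q n : ℕ)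
    (g : SimpleGraph ℕ) (r : ℕ) : Prop :=
  ∃ D φ x R W, GrowState m d n g K j U D φ x R W ∧ Dᶜ.card = q ∧ R.card = r

section Growth

variable {V : Type*} [Fintype V] {m d n K j : ℕ} {U : SimpleGraph V} {g : SimpleGraph ℕ}
  {D : Finset V} {φ : V → ℕ} {x : ℕ} {R S : Finset ℕ} {W : ℕ → Finset ℕ}

theorem ClosedCopy.image_subset_Icc (hU : U.Connected) (he : U.edgeSet.ncard ≤ Fintype.card V)
    (hs : ClosedCopy g U D φ) (hg : SupportedOn n g) (hD : CarriesCycle U D) :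
    D.image φ ⊆ Finset.Icc 1 n := by
  refine Finset.image_subset_iff.2 fun b hb => ?_
  obtain ⟨u, hu, hbu⟩ := hD.exists_adj hU he hb
  exact hg _ _ (hs.map_adj b hb u hu hbu)

theorem ClosedCopy.mem_lowDegSet_of_adj (hU : U.Connected)
    (he : U.edgeSet.ncard ≤ Fintype.card V) (hcomp : UnicyclicComplete U d)
    (hs : ClosedCopy g U D φ) (hg : SupportedOn n g) (hD : CarriesCycle U D) {b v : V} (hb : b ∈ D)
    (hv : v ∉ D) (hbv : U.Adj b v) : φ b ∈ lowDegSet d g n := by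
  obtain ⟨u, hu, hbu⟩ := hD.exists_adj hU he hb
  have hdeg : 2 ≤ (U.neighborSet b).ncard :=
    (Set.one_lt_ncard (Set.toFinite _)).2 ⟨u, hbu, v, hbv, ne_of_mem_of_not_mem hu hv⟩
  have hsub : g.neighborSet (φ b) ⊆ φ '' (U.neighborSet b \ {v}) := fun r hr =>
    let ⟨w, hw, hbw, hwr⟩ := hs.exists_of_adj b hb hdeg r hr
    ⟨w, ⟨hbw, ne_of_mem_of_not_mem hw hv⟩, hwr⟩
  refine mem_lowDegSet.2
    ⟨hs.image_subset_Icc hU he hg hD (Finset.mem_image_of_mem _ hb), ?_⟩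
  calc graphDeg g (φ b) ≤ (U.neighborSet b \ {v}).ncard :=
        (Set.ncard_le_ncard hsub (Set.toFinite _)).trans (Set.ncard_image_le (Set.toFinite _))
    _ < (U.neighborSet b).ncard := Set.ncard_sdiff_singleton_lt_of_mem hbv (Set.toFinite _)
    _ = d := hcomp b hdeg

theorem GrowState.attachStep_of_disjoint (hU : U.Connected)
    (he : U.edgeSet.ncard ≤ Fintype.card V) (hU' : ∀ u, ∃ v, U.Adj u v) (hd : m ≤ d)
    (hg : UAReachable m d n g) (hs : GrowState m d n g K j U D φ x R W)
    (hS : S ∈ attachSets m d n g) (hSD : Disjoint (D.image φ) S) :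
    GrowState m d (n + 1) (attachStep g (n + 1) S) K j U D φ x
      (R.filter fun r => Disjoint (W r) S) W where
  family := hs.family.filter_disjoint_attachStep S
  copy := hs.copy.attachStep_of_disjoint
    (Finset.image_subset_iff.1
      (hs.copy.image_subset_Icc hU he (hg.invariant hd).supportedOn hs.core))
    fun _ hu => Finset.disjoint_left.1 hSD (Finset.mem_image_of_mem _ hu)
  core := hs.core
  mem := hs.mem
  count := hs.count.trans (ncard_copyEdgeSetsAvoiding_mono hU'
    ((hg.attach hS).invariant hd).supportedOn (le_attachStep ..) x)

theorem PartialCopy.exists_growState {T : ℕ → Finset ℕ} {X : Set ℕ}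
    (hU : U.Connected) (he : U.edgeSet.ncard ≤ Fintype.card V) (hcomp : UnicyclicComplete U d)
    (hd : m ≤ d) (hg : UAReachable m d n g)
    (hs : PartialCopy m g U (Fintype.card V) D φ T X) (hD : CarriesCycle U D)
    (hF : TreeFamily m d n g (Fintype.card V) K R W) (hx : x ∈ φ '' D)
    (hj : j ≤ (copyEdgeSetsAvoiding g U x).ncard) :
    ∃ D' φ', D ⊆ D' ∧ GrowState m d n g K j U D' φ' x R W := by
  classical
  have hinv := hg.invariant hd
  obtain ⟨D', φ', hDD', hφ, hD', hs'⟩ := hs.exists_closedCopy hU he hcomp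
    hinv.supportedOn.finite_neighborSet hinv.graphDeg_le (Finset.card_le_univ _) hD
  refine ⟨D', φ', hDD', hF, hs', hD', ?_, hj⟩
  rw [← hφ.image_eq] at hx
  exact Set.image_mono (Finset.coe_subset.2 hDD') hx

-- The new vertex plays the role of `v`; the trees rooted in `J` provide the branches at `v`.
theorem GrowState.exists_attachStep_insert [DecidableEq V] (hU : U.Connected)
    (he : U.edgeSet.ncard ≤ Fintype.card V) (hU' : ∀ u, ∃ v, U.Adj u v)
    (hcomp : UnicyclicComplete U d) (hd : m ≤ d) (hg : UAReachable m d n g)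
    (hs : GrowState m d n g K j U D φ x R W) {b v : V} (hb : b ∈ D) (hv : v ∉ D) (hbv : U.Adj b v)
    {J : Finset ℕ} (hJ : J ⊆ R) (hJD : ∀ r ∈ J, Disjoint (W r) (D.image φ))
    (hS : insert (φ b) J ∈ attachSets m d n g) :
    ∃ D' φ', insert v D ⊆ D' ∧ GrowState m d (n + 1) (attachStep g (n + 1) (insert (φ b) J)) K j U
      D' φ' x (R.filter fun r => Disjoint (W r) (insert (φ b) J)) W := by
  have hsupp := (hg.invariant hd).supportedOn
  have hnbr : {u | u ∈ D ∧ U.Adj v u} = {b} := by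
    ext u
    exact ⟨fun hu => hs.core.eq_of_adj hU he hv hb hu.1 hbv.symm hu.2,
      by rintro rfl; exact ⟨hb, hbv.symm⟩⟩
  have hstep := (hs.copy.partialCopy m (Fintype.card V) W).attachStep hsupp
    (by simpa using Finset.coe_subset.2 (hs.copy.image_subset_Icc hU he hsupp hs.core))
    (hs.family.mono hJ) (fun r hr => by simpa using Finset.disjoint_coe.2 (hJD r hr)) hv
    (S := insert (φ b) J) (by rw [hnbr, Set.image_singleton, Finset.coe_insert]; rfl)
  refine hstep.exists_growState hU he hcomp hd (hg.attach hS) (hs.core.insert hv hb hbv.symm)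
    (hs.family.filter_disjoint_attachStep _) ?_ (hs.count.trans (ncard_copyEdgeSetsAvoiding_mono hU'
      ((hg.attach hS).invariant hd).supportedOn (le_attachStep ..) x))
  rw [image_update_insert hv]
  exact Set.mem_insert_of_mem _ hs.mem

theorem card_image_insert_powersetCard {α : Type*} [DecidableEq α] {a : α} {s : Finset α}
    (ha : a ∉ s) (i : ℕ) : ((s.powersetCard i).image (insert a)).card = s.card.choose i := by
  rw [Finset.card_image_of_injOn, Finset.card_powersetCard]
  intro t ht t' ht' h
  have hat : ∀ u ∈ s.powersetCard i, a ∉ u := fun u hu hau =>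
    ha ((Finset.mem_powersetCard.1 hu).1 hau)
  rw [← Finset.erase_insert (hat t ht), ← Finset.erase_insert (hat t' ht')]
  exact congrArg (Finset.erase · a) h

theorem GrowState.div_le_stepProb [DecidableEq V] (hm : 1 ≤ m) (hU : U.Connected)
    (he : U.edgeSet.ncard ≤ Fintype.card V) (hU' : ∀ u, ∃ v, U.Adj u v)
    (hcomp : UnicyclicComplete U d) (hd : 2 * m < d) (hg : UAReachable m d n g) (hn : 0 < n)
    (hs : GrowState m d n g K j U D φ x R W) (hD : D ≠ Finset.univ) {p : ℝ} (hp : 0 ≤ p)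
    (hR : p * n ^ (m - 1) ≤ (R.card - Fintype.card V).choose (m - 1)) :
    p / n ≤ stepProb m d n g (fun S => ∃ D' φ', D'ᶜ.card < Dᶜ.card ∧
      GrowState m d (n + 1) (attachStep g (n + 1) S) K j U D' φ' x
        (R.filter fun r => Disjoint (W r) S) W) := by
  obtain ⟨u, hu, -⟩ := hs.mem
  obtain ⟨b, hb, v, hv, hbv⟩ := exists_adj_of_connected hU ⟨u, hu⟩ hD
  set R' := R.filter fun r => Disjoint (W r) (D.image φ)
  have hR'R : R' ⊆ R := Finset.filter_subset ..
  have hbR' : φ b ∉ R' := fun hb' => Finset.disjoint_left.1 (Finset.mem_filter.1 hb').2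
    (hs.family.root_mem (hR'R hb')) (Finset.mem_image_of_mem _ hb)
  have hlow : φ b ∈ lowDegSet d g n := hs.copy.mem_lowDegSet_of_adj hU he hcomp
    (hg.invariant (by omega)).supportedOn hs.core hb hv hbv
  have hcard : R.card - Fintype.card V ≤ R'.card := by
    have h : R.card ≤ R'.card + (D.image φ).card :=
      hs.family.card_le_card_filter_disjoint_add (D.image φ)
    have h' : (D.image φ).card ≤ Fintype.card V :=
      Finset.card_image_le.trans (Finset.card_le_univ _)
    omega
  have hprob := hg.div_pow_le_stepProb hd hn (T := (R'.powersetCard (m - 1)).image (insert (φ b)))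
    (p := fun S => ∃ D' φ', D'ᶜ.card < Dᶜ.card ∧
      GrowState m d (n + 1) (attachStep g (n + 1) S) K j U D' φ' x
        (R.filter fun r => Disjoint (W r) S) W) (fun S hS => ?_) (Nat.sub_le m 1) hp
    (by
      rw [card_image_insert_powersetCard hbR']
      exact hR.trans (mod_cast Nat.choose_le_choose _ hcard))
  · rwa [Nat.sub_sub_self hm, pow_one] at hprob
  obtain ⟨J, hJ, rfl⟩ := Finset.mem_image.1 hS
  obtain ⟨hJR, hJc⟩ := Finset.mem_powersetCard.1 hJ
  have hS : insert (φ b) J ∈ attachSets m d n g := by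
    refine mem_attachSets.2 ⟨Finset.insert_subset hlow
      ((hJR.trans hR'R).trans hs.family.subset_lowDegSet), ?_⟩
    rw [Finset.card_insert_of_notMem fun h => hbR' (hJR h), hJc, Nat.sub_add_cancel hm]
  obtain ⟨D', φ', hDD', hs'⟩ := hs.exists_attachStep_insert hU he hU' hcomp (by omega) hg hb hv hbv
    (hJR.trans hR'R) (fun r hr => (Finset.mem_filter.1 (hJR hr)).2) hS
  refine ⟨hS, D', φ', Finset.card_lt_card (Finset.compl_ssubset_compl.2 ?_), hs'⟩
  exact (Finset.ssubset_insert hv).trans_subset hDD'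

theorem UAReachable.stepProb_not_disjoint_image_le (hm : 1 ≤ m) (hd : 2 * m < d)
    (hg : UAReachable m d n g) (D : Finset V) (φ : V → ℕ) :
    stepProb m d n g (fun S => ¬ Disjoint (D.image φ) S) ≤ Fintype.card V * (m * d) / n := by
  refine (hg.stepProb_not_disjoint_le hm hd _).trans ?_
  rw [mul_div_assoc (Fintype.card V : ℝ)]
  have hcard : (D.image φ).card ≤ Fintype.card V :=
    Finset.card_image_le.trans (Finset.card_le_univ _)
  exact mul_le_mul_of_nonneg_right (mod_cast hcard) (by positivity)

theorem HitsFromLinear.grow [DecidableEq V] (hm : 1 ≤ m) (hU : U.Connected)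
    (he : U.edgeSet.ncard ≤ Fintype.card V) (hU' : ∀ u, ∃ v, U.Adj u v)
    (hcomp : UnicyclicComplete U d) (hd : 2 * m < d) {Z : Set (SimpleGraph ℕ)}
    (hZ : Persistent m d Z) {q : ℕ}
    (hq : HitsFromLinear m d Z fun n g r => ∃ q' ≤ q, HasGrowState m d U K j q' n g r) :
    HitsFromLinear m d Z (HasGrowState m d U K j (q + 1)) := by
  refine hq.of_race hd hZ fun c hc => ?_
  obtain ⟨p, hp, N, hN⟩ := exists_mul_pow_le_choose (half_pos hc) (m - 1)
  have hlarge : ∀ᶠ n : ℕ in atTop, (Fintype.card V : ℝ) ≤ c / 2 * n :=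
    (tendsto_natCast_atTop_atTop.const_mul_atTop (half_pos hc)).eventually_ge_atTop _
  refine ⟨p, hp, Fintype.card V * (m * d), by positivity, ?_⟩
  filter_upwards [eventually_ge_atTop N, eventually_gt_atTop 0, hlarge] with n hnN hn hnV
  rintro g _ hg ⟨D, φ, x, R, W, hs, hD, rfl⟩ hR
  have hfilter (S) (hS : S ∈ attachSets m d n g) :
      R.card ≤ (R.filter fun r => Disjoint (W r) S).card + m :=
    card_of_mem_attachSets hS ▸ hs.family.card_le_card_filter_disjoint_add S
  refine ⟨_, _, hs.div_le_stepProb hm hU he hU' hcomp hd hg hn ?_ hp.le (hN n hnN _ ?_),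
    hg.stepProb_not_disjoint_image_le hm hd D φ, fun S hS => ⟨?_, fun hSD => ?_⟩⟩
  · rintro rfl
    simp at hD
  · have hsub : (R.card : ℝ) ≤ (R.card - Fintype.card V : ℕ) + Fintype.card V :=
      mod_cast (by omega)
    linarith
  · rintro ⟨D', φ', hD', hs'⟩
    exact ⟨_, hfilter S hS, _, by omega, D', φ', x, _, W, hs', rfl, rfl⟩
  · exact ⟨_, hfilter S hS, D, φ, x, _, W,
      hs.attachStep_of_disjoint hU he hU' (by omega) hg hS (not_not.1 hSD), hD, rfl⟩

theorem HasGrowState.lt_ncard_copyEdgeSets [DecidableEq V] (hU' : ∀ u, ∃ v, U.Adj u v)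
    (hg : SupportedOn n g) {r : ℕ} (h : HasGrowState m d U K j 0 n g r) :
    j < (copyEdgeSets g U).ncard := by
  obtain ⟨D, φ, x, R, W, hs, hD, -⟩ := h
  obtain rfl : D = Finset.univ := by simpa using hD
  obtain ⟨b, -, rfl⟩ := hs.mem
  exact hs.count.trans_lt (hs.copy.ncard_avoiding_lt hU' hg b)

theorem hitsFromLinear_hasGrowState [DecidableEq V] (hm : 1 ≤ m) (hU : U.Connected)
    (he : U.edgeSet.ncard ≤ Fintype.card V) (hU' : ∀ u, ∃ v, U.Adj u v)
    (hcomp : UnicyclicComplete U d) (hd : 2 * m < d) (K j q : ℕ) :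
    HitsFromLinear m d {g | j + 1 ≤ (copyEdgeSets g U).ncard}
      fun n g r => ∃ q' ≤ q, HasGrowState m d U K j q' n g r := by
  have hZ := persistent_le_ncard_copyEdgeSets (m := m) (by omega : m ≤ d) hU' (j + 1)
  induction q with
  | zero =>
    refine fun c _ => ⟨1, one_pos, .of_forall fun n g r hg ⟨q', hq', hs⟩ _ => ?_⟩
    obtain rfl : q' = 0 := by omega
    exact (hZ.hitProb_of_mem hd hg
      (hs.lt_ncard_copyEdgeSets hU' (hg.invariant (by omega)).supportedOn)).ge
  | succ q ih =>
    refine ih.of_or (ih.grow hm hU he hU' hcomp hd hZ) fun n g r ⟨q', hq', hs⟩ => ?_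
    obtain hlt | rfl := Nat.lt_succ_iff_lt_or_eq.1 (Nat.lt_succ_of_le hq')
    · exact Or.inl ⟨q', Nat.le_of_lt_succ hlt, hs⟩
    · exact Or.inr hs

end Growth

/-! ### Closing the cycle -/

section Closing

variable {V : Type*} [Fintype V] {m d n K j e : ℕ} {U : SimpleGraph V} {c : ℕ → V}
  {g : SimpleGraph ℕ} {φ : V → ℕ} {R J : Finset ℕ} {W T : ℕ → Finset ℕ}

-- The new vertex becomes the last vertex of the cycle, adjacent to both ends of the path that
-- carries the others.
theorem IsCycleEnum.exists_growState_of_path (hc : IsCycleEnum U (e + 2) c)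
    (hU : U.Connected) (he : U.edgeSet.ncard ≤ Fintype.card V) (hU' : ∀ u, ∃ v, U.Adj u v)
    (hcomp : UnicyclicComplete U d) (hd : m ≤ d)
    (hg : UAReachable m d n g) (hF : TreeFamily m d n g (Fintype.card V) K R W)
    (hj : j ≤ (copyEdgeSets g U).ncard) {r : ℕ} (hr : r ∈ R)
    (hs : PartialCopy m g U (Fintype.card V) (prefixSet c (e + 1)) φ T (W r)) (hJ : J ⊆ R)
    (hrJ : r ∉ J) (hS : {φ (c 0), φ (c e)} ∪ J ∈ attachSets m d n g) :
    ∃ D φ', GrowState m d (n + 1) (attachStep g (n + 1) ({φ (c 0), φ (c e)} ∪ J)) K j U D φ' (n + 1)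
      (R.filter fun r => Disjoint (W r) ({φ (c 0), φ (c e)} ∪ J)) W := by
  classical
  have hsupp := (hg.invariant hd).supportedOn
  have hsupp' := ((hg.attach hS).invariant hd).supportedOn
  have hclose : U.Adj (c (e + 1)) (c 0) := hc.close ▸ hc.adj (e + 1) (by omega)
  have hnbr : {u | u ∈ prefixSet c (e + 1) ∧ U.Adj (c (e + 1)) u} = {c 0, c e} := by
    ext u
    constructor
    · rintro ⟨hu, hadj⟩
      have hu' : u ∈ prefixSet c (e + 2) :=
        prefixSet_succ c (e + 1) ▸ Finset.mem_insert_of_mem hu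
      exact (hc.close ▸ hc.eq_or_eq_of_adj hU he (by omega) hu' hadj).symm
    · rintro (rfl | rfl)
      · exact ⟨mem_prefixSet.2 ⟨0, by omega, rfl⟩, hclose⟩
      · exact ⟨mem_prefixSet.2 ⟨e, by omega, rfl⟩, (hc.adj e (by omega)).symm⟩
  have hstep := hs.attachStep hsupp (Finset.coe_subset.2 (hF.subset_Icc r hr)) (hF.mono hJ)
    (fun r' hr' => Finset.disjoint_coe.2 (hF.disjoint (hJ hr') hr (ne_of_mem_of_not_mem hr' hrJ)))
    (hc.notMem_prefixSet le_rfl (by omega)) (S := {φ (c 0), φ (c e)} ∪ J)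
    (by rw [hnbr, Set.image_pair, Finset.coe_union, Finset.coe_pair])
  rw [← prefixSet_succ] at hstep
  obtain ⟨D, φ', -, hgrow⟩ := hstep.exists_growState (x := n + 1) hU he hcomp hd (hg.attach hS)
    hc.carriesCycle (hF.filter_disjoint_attachStep _)
    ⟨c (e + 1), mem_prefixSet.2 ⟨e + 1, by omega, rfl⟩, Function.update_self ..⟩
    (hj.trans (ncard_copyEdgeSets_le_avoiding hU' hsupp hsupp' (le_attachStep ..)))
  exact ⟨D, φ', hgrow⟩

theorem TreeFamily.exists_closing_vertex (hm : m ≠ 0) (hU : U.Connected)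
    (he : U.edgeSet.ncard ≤ Fintype.card V) (hU' : ∀ u, ∃ v, U.Adj u v)
    (hcomp : UnicyclicComplete U d) (hd : m + 1 < d) (hc : IsCycleEnum U (e + 2) c)
    (hg : UAReachable m d n g) (hF : TreeFamily m d n g (Fintype.card V + (e + 1)) K R W)
    (hj : j ≤ (copyEdgeSets g U).ncard) {r : ℕ} (hr : r ∈ R) :
    ∃ z ∈ W r, z ≠ r ∧ z ∈ lowDegSet d g n ∧ ∀ J ⊆ R, r ∉ J →
      {r, z} ∪ J ∈ attachSets m d n g → ∃ D φ, GrowState m d (n + 1)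
        (attachStep g (n + 1) ({r, z} ∪ J)) K j U D φ (n + 1)
        (R.filter fun r' => Disjoint (W r') ({r, z} ∪ J)) W := by
  obtain ⟨φ, T, hs, rfl, -, hdeg⟩ :=
    (hF.tree r hr).exists_partialCopy_prefixSet hm hU he hc e (by omega)
  have h0 : c 0 ∈ prefixSet c (e + 1) := mem_prefixSet.2 ⟨0, by omega, rfl⟩
  have hce : c e ∈ prefixSet c (e + 1) := mem_prefixSet.2 ⟨e, by omega, rfl⟩
  have hz : φ (c e) ∈ W (φ (c 0)) := hs.image_subset (Set.mem_image_of_mem φ hce)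
  refine ⟨φ (c e), hz, fun heq => ?_, mem_lowDegSet.2 ⟨hF.subset_Icc _ hr hz, by omega⟩,
    fun J hJ hrJ hS => hc.exists_growState_of_path hU he hU' hcomp (by omega) hg
      (hF.of_le (Nat.le_add_right ..)) hj hr hs hJ hrJ hS⟩
  have hle := hc.three_le
  have := hc.inj e (by omega) 0 (by omega) (hs.inj hce h0 heq)
  omega

theorem injOn_pair_union {α : Type*} [DecidableEq α] {R₁ R₂ : Finset α} (hR : Disjoint R₁ R₂)
    {z : α → α} (hz : ∀ r ∈ R₁, z r ∉ R₁ ∪ R₂) (i : ℕ) :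
    Set.InjOn (fun q : α × Finset α => {q.1, z q.1} ∪ q.2)
      (R₁ ×ˢ R₂.powersetCard i : Finset (α × Finset α)) := by
  have hinter : ∀ q ∈ R₁ ×ˢ R₂.powersetCard i,
      ({q.1, z q.1} ∪ q.2) ∩ R₁ = {q.1} ∧ ({q.1, z q.1} ∪ q.2) ∩ R₂ = q.2 := by
    rintro ⟨r, J⟩ hq
    simp only [Finset.mem_product, Finset.mem_powersetCard] at hq
    obtain ⟨hr, hJ, -⟩ := hq
    obtain ⟨hz₁, hz₂⟩ := not_or.1 (mt Finset.mem_union.2 (hz r hr))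
    have hr₂ : r ∉ R₂ := Finset.disjoint_left.1 hR hr
    have hJ₁ : J ∩ R₁ = ∅ := Finset.disjoint_iff_inter_eq_empty.1 (hR.mono_right hJ).symm
    simp [Finset.insert_inter_of_mem hr, hz₁, hz₂, hr₂, hJ₁, hJ]
  intro q hq q' hq' (h : {q.1, z q.1} ∪ q.2 = {q'.1, z q'.1} ∪ q'.2)
  obtain ⟨h₁, h₂⟩ := hinter q hq
  obtain ⟨h₁', h₂'⟩ := hinter q' hq'
  rw [h] at h₁ h₂
  exact Prod.ext (Finset.singleton_injective (h₁.symm.trans h₁')) (h₂.symm.trans h₂')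

theorem TreeFamily.div_le_stepProb_growState (hm : 2 ≤ m) (hU : U.Connected)
    (he : U.edgeSet.ncard ≤ Fintype.card V) (hU' : ∀ u, ∃ v, U.Adj u v)
    (hcomp : UnicyclicComplete U d) (hd : 2 * m < d) (hc : IsCycleEnum U (e + 2) c)
    (hg : UAReachable m d n g) (hn : 0 < n)
    (hF : TreeFamily m d n g (Fintype.card V + (e + 1)) K R W)
    (hj : j ≤ (copyEdgeSets g U).ncard) {p : ℝ} (hp : 0 ≤ p)
    (hR : p * n ^ (m - 1) ≤ (R.card / 2 : ℕ) * (R.card / 2).choose (m - 2)) :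
    p / n ≤ stepProb m d n g (fun S => ∃ D φ, GrowState m d (n + 1) (attachStep g (n + 1) S) K j U
      D φ (n + 1) (R.filter fun r => Disjoint (W r) S) W) := by
  choose! z hzW hzr hzlow hgrow using fun r hr =>
    hF.exists_closing_vertex (by omega) hU he hU' hcomp (by omega) hc hg hj (r := r) hr
  have hzR : ∀ r ∈ R, z r ∉ R := fun r hr hzR => hzr r hr (hF.eq_of_root_mem hr hzR (hzW r hr))
  obtain ⟨R₁, hR₁, hR₁c⟩ := Finset.exists_subset_card_eq (Nat.div_le_self R.card 2)
  have hR₂c : R.card / 2 ≤ (R \ R₁).card := by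
    rw [Finset.card_sdiff_of_subset hR₁]
    omega
  have hinj := injOn_pair_union (Finset.disjoint_sdiff : Disjoint R₁ (R \ R₁)) (z := z)
    (fun r hr => (Finset.union_sdiff_of_subset hR₁).symm ▸ hzR r (hR₁ hr)) (m - 2)
  have hprob := hg.div_pow_le_stepProb hd hn (i := m - 1) (a := p)
    (T := (R₁ ×ˢ (R \ R₁).powersetCard (m - 2)).image
      fun q => {q.1, z q.1} ∪ q.2)
    (p := fun S => ∃ D φ, GrowState m d (n + 1) (attachStep g (n + 1) S) K j U
      D φ (n + 1) (R.filter fun r => Disjoint (W r) S) W) (fun S hS => ?_) (Nat.sub_le m 1) hp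
    (by
      rw [Finset.card_image_of_injOn hinj, Finset.card_product, Finset.card_powersetCard, hR₁c]
      exact hR.trans (mod_cast Nat.mul_le_mul_left _ (Nat.choose_le_choose _ hR₂c)))
  · rwa [Nat.sub_sub_self (by omega), pow_one] at hprob
  simp only [Finset.mem_image, Finset.mem_product, Finset.mem_powersetCard, Prod.exists] at hS
  obtain ⟨r, J, ⟨hr, hJ, hJc⟩, rfl⟩ := hS
  have hJR : J ⊆ R := hJ.trans Finset.sdiff_subset
  have hrJ : r ∉ J := fun h => (Finset.mem_sdiff.1 (hJ h)).2 hr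
  have hrR := hR₁ hr
  have hS : {r, z r} ∪ J ∈ attachSets m d n g := by
    refine mem_attachSets.2 ⟨Finset.union_subset (Finset.insert_subset (hF.subset_lowDegSet hrR)
      (Finset.singleton_subset_iff.2 (hzlow r hrR))) (hJR.trans hF.subset_lowDegSet), ?_⟩
    rw [Finset.card_union_of_disjoint, Finset.card_pair (hzr r hrR).symm, hJc]
    · omega
    · exact Finset.disjoint_insert_left.2
        ⟨hrJ, Finset.disjoint_singleton_left.2 fun h => hzR r hrR (hJR h)⟩
  exact ⟨hS, hgrow r hrR J hJR hrJ hS⟩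

theorem hitsFromLinear_hasTreeFamily (hm : 2 ≤ m) (hU : U.Connected)
    (he : U.edgeSet.ncard ≤ Fintype.card V) (hU' : ∀ u, ∃ v, U.Adj u v)
    (hcomp : UnicyclicComplete U d) (hd : 2 * m < d) (hc : IsCycleEnum U (e + 2) c) (j K : ℕ) :
    HitsFromLinear m d {g | j + 1 ≤ (copyEdgeSets g U).ncard}
      (HasTreeFamily m d {g | j ≤ (copyEdgeSets g U).ncard} (Fintype.card V + (e + 1)) K) := by
  classical
  have hmd : m ≤ d := by omega
  refine (hitsFromLinear_hasGrowState (by omega) hU he hU' hcomp hd K j (Fintype.card V)).of_race hd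
    (persistent_le_ncard_copyEdgeSets hmd hU' (j + 1)) fun γ hγ => ?_
  obtain ⟨a, ha, N, hN⟩ := exists_mul_pow_le_choose (show 0 < γ / 4 by positivity) (m - 2)
  have hlarge : ∀ᶠ n : ℕ in atTop, 2 ≤ γ * n :=
    (tendsto_natCast_atTop_atTop.const_mul_atTop hγ).eventually_ge_atTop _
  refine ⟨γ / 4 * a, by positivity, 0, le_rfl, ?_⟩
  filter_upwards [eventually_ge_atTop N, eventually_gt_atTop 0, hlarge] with n hnN hn hnγ
  rintro g _ hg ⟨hj, R, W, hF, rfl⟩ hR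
  have hhalf : γ / 4 * n ≤ (R.card / 2 : ℕ) := by
    have : (R.card : ℝ) ≤ 2 * (R.card / 2 : ℕ) + 1 := mod_cast (by omega)
    linarith
  have hcount : γ / 4 * a * n ^ (m - 1) ≤ (R.card / 2 : ℕ) * (R.card / 2).choose (m - 2) := by
    calc γ / 4 * a * (n : ℝ) ^ (m - 1) = γ / 4 * n * (a * n ^ (m - 2)) := by
          rw [show m - 1 = m - 2 + 1 by omega, pow_succ]
          ring
      _ ≤ _ := mul_le_mul hhalf (hN n hnN _ hhalf) (by positivity) (by positivity)
  have hfilter (S) (hS : S ∈ attachSets m d n g) :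
      R.card ≤ (R.filter fun r => Disjoint (W r) S).card + m :=
    card_of_mem_attachSets hS ▸ hF.card_le_card_filter_disjoint_add S
  refine ⟨_, fun _ => False, hF.div_le_stepProb_growState hm hU he hU' hcomp hd hc hg hn hj
    (by positivity) hcount, by simp [stepProb], fun S hS => ⟨?_, fun _ => ?_⟩⟩
  · rintro ⟨D, φ, hs⟩
    exact ⟨_, hfilter S hS, _, Finset.card_le_univ _, D, φ, _, _, W, hs, rfl, rfl⟩
  · exact ⟨_, hfilter S hS, persistent_le_ncard_copyEdgeSets hmd hU' j n g hg hj S hS, _, W,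
      hF.filter_disjoint_attachStep S, rfl⟩

end Closing

theorem tendsto_lawMean_le_ncard_copyEdgeSets {V : Type*} [Fintype V] {m d ℓ : ℕ}
    {U : SimpleGraph V} {Ω : Type*} [MeasurableSpace Ω] {μ : Measure Ω} [IsProbabilityMeasure μ]
    {G : ℕ → Ω → SimpleGraph ℕ} (hm : 2 ≤ m) (hd : 2 * m < d) (hG : IsUAProcess m d μ G)
    (hU : U.Connected) (he : U.edgeSet.ncard ≤ Fintype.card V) (hU' : ∀ u, ∃ v, U.Adj u v)
    (hcomp : UnicyclicComplete U d) {c : ℕ → V} (hc : IsCycleEnum U ℓ c) (j : ℕ) :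
    Tendsto (fun n => lawMean m d μ G n ({g | j ≤ (copyEdgeSets g U).ncard}.indicator 1)) atTop
      (𝓝 1) := by
  obtain ⟨e, rfl⟩ : ∃ e, ℓ = e + 2 := ⟨ℓ - 2, by have := hc.three_le; omega⟩
  have hZ (j : ℕ) := persistent_le_ncard_copyEdgeSets (U := U) (by omega : m ≤ d) hU' j
  induction j with
  | zero =>
    refine tendsto_const_nhds.congr' ?_
    filter_upwards [eventually_ge_atTop m] with n hn
    simpa using (hG.lawMean_one hd hn).symm
  | succ j ih =>
    obtain ⟨ε, hε, hhit⟩ := (HitsFromLinear.hasTreeFamily_zero (by omega) hd (hZ (j + 1)) (hZ j) _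
      (hitsFromLinear_hasTreeFamily hm hU he hU' hcomp hd hc j) 1).eventually_le_hitProb hd
    exact hG.tendsto_lawMean_indicator hd (hZ (j + 1)) ih hε hhit

theorem IsCycleEnum.exists_adj_of_connected {V : Type*} {U : SimpleGraph V} {ℓ : ℕ}
    {c : ℕ → V} (hc : IsCycleEnum U ℓ c) (hU : U.Connected) (u : V) : ∃ v, U.Adj u v := by
  have hle := hc.three_le
  have hne : c 0 ≠ c 1 := fun h => absurd (hc.inj 0 (by omega) 1 (by omega) h) (by omega)
  have : Nontrivial V := ⟨_, _, hne⟩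
  exact hU.preconnected.exists_adj_of_nontrivial u

theorem uniform_attachment_complete_unicyclic_count_general
    (m d : ℕ) (hm : 2 ≤ m) (hd : 2 * m < d)
    {Ω : Type*} [MeasurableSpace Ω] (μ : Measure Ω) [IsProbabilityMeasure μ]
    (G : ℕ → Ω → SimpleGraph ℕ) (hG : IsUAProcess m d μ G)
    (ℓ : ℕ) {t : ℕ} (U₀ : SimpleGraph (Fin t))
    (hU₀ : IsUnicyclic U₀) (hcyc : HasCycleOfLength U₀ ℓ) (hcompl : UnicyclicComplete U₀ d)
    (n₀ : ℕ) :
    Tendsto (fun n : ℕ => μ {ω | n₀ < unicyclicCount (G n ω) U₀}) atTop (𝓝 1) := by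
  obtain ⟨c, hc⟩ := hcyc.exists_enum
  have hU' := hc.exists_adj_of_connected hU₀.1
  have hlaw := tendsto_lawMean_le_ncard_copyEdgeSets hm hd hG hU₀.1 (by simpa using hU₀.2.le) hU'
    hcompl hc (n₀ + 1)
  have hlower := ENNReal.tendsto_ofReal hlaw
  rw [ENNReal.ofReal_one] at hlower
  refine tendsto_of_tendsto_of_tendsto_of_le_of_le hlower tendsto_const_nhds (fun n => ?_)
    fun n => prob_le_one
  refine (ENNReal.ofReal_le_ofReal (lawMean_mono fun g hg => ?_)).trans
    (hG.lawMean_indicator_le {g | n₀ < unicyclicCount g U₀})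
  have hinv := hg.invariant (by omega : m ≤ d)
  have hle := ncard_copyEdgeSets_le_unicyclicCount hU₀ hcompl hU' hinv.supportedOn hinv.graphDeg_le
  refine Set.indicator_apply_le' (fun h => ?_) fun _ =>
    Set.indicator_nonneg (fun _ _ => zero_le_one) g
  have hmem : g ∈ {g | n₀ < unicyclicCount g U₀} := Nat.lt_of_lt_of_le h hle
  exact (Set.indicator_of_mem hmem _).ge

/-- In the bounded-degree uniform attachment process with `m ≥ 2`, if `U₀` is the complete
max-admissible unicyclic graph of depth `k` containing an `ℓ`-cycle (all of whose non-leaf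
vertices have degree `d`), then for every `n₀`, `P(N_{U₀}(n) > n₀) → 1` as `n → ∞`. -/
theorem uniform_attachment_complete_unicyclic_count
    (m d : ℕ) (hm : 2 ≤ m) (hd : 2 * m < d)
    {Ω : Type*} [MeasurableSpace Ω] (μ : Measure Ω) [IsProbabilityMeasure μ]
    (G : ℕ → Ω → SimpleGraph ℕ) (hG : IsUAProcess m d μ G)
    (ℓ k : ℕ) {t : ℕ} (U₀ : SimpleGraph (Fin t))
    (hU₀ : IsUnicyclic U₀) (hcyc : HasCycleOfLength U₀ ℓ) (hdepth : UnicyclicDepth U₀ k)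
    (hcompl : UnicyclicComplete U₀ d) (hadm : MaxAdmissibleUnicyclic m d U₀)
    (n₀ : ℕ) :
    Tendsto (fun n : ℕ => μ {ω | n₀ < unicyclicCount (G n ω) U₀}) atTop (𝓝 1) := by
  exact uniform_attachment_complete_unicyclic_count_general m d hm hd μ G hG ℓ U₀ hU₀ hcyc hcompl n₀
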